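/- Let n ≥ 3 and let K ⊆ ℝⁿ be a closed convex set with nonempty interior and K ≠ ℝⁿ. Let δ : S^{n−1} → ℝ be continuous and for u ∈ S^{n−1} set H(u) = {x ∈ ℝⁿ : ⟨x, u⟩ = δ(u)}. If for every u ∈ S^{n−1} either H(u) ⊆ K or frontier K ∩ H(u) is an (n−1)-dimensional convex quadric in H(u), then frontier K is a convex quadric. -/

import Mathlib

open Set Metric RealInnerProductSpace

noncomputable section

/-- Euclidean n-space. -/
abbrev En (n : ℕ) := EuclideanSpace ℝ (Fin n)

/-- A quadric surface in ℝⁿ: the zero set of a quadratic polynomial whose quadratic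
part (given by a symmetric matrix) is not identically zero. -/
def IsQuadricSurface {n : ℕ} (Q : Set (En n)) : Prop :=
  ∃ (a : Matrix (Fin n) (Fin n) ℝ) (b : Fin n → ℝ) (c : ℝ),
    a.IsSymm ∧ a ≠ 0 ∧
    Q = {x : En n | (∑ i, ∑ k, a i k * x i * x k) + 2 * (∑ i, b i * x i) + c = 0}

/-- A real quadric surface: a nonempty quadric surface. -/
def IsRealQuadricSurface {n : ℕ} (Q : Set (En n)) : Prop :=
  IsQuadricSurface Q ∧ Q.Nonempty

/-- The set of connected components of a subset `F` of a topological space. -/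
def componentsIn {α : Type*} [TopologicalSpace α] (F : Set α) : Set (Set α) :=
  {C | ∃ x ∈ F, C = connectedComponentIn F x}

/-- A convex quadric: the frontier of a convex connected component of the complement
of a real quadric surface. -/
def IsConvexQuadric {n : ℕ} (S : Set (En n)) : Prop :=
  ∃ Q U : Set (En n), IsRealQuadricSurface Q ∧ U ∈ componentsIn Qᶜ ∧
    Convex ℝ U ∧ S = frontier U
/-- `S` is an (n−1)-dimensional convex quadric in the hyperplane `H ⊆ ℝⁿ`:
for some affine isometry φ : ℝ^{n−1} → ℝⁿ with image `H`, the set φ⁻¹(S) is a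
convex quadric in ℝ^{n−1}. -/
def IsConvexQuadricIn {n : ℕ} (H S : Set (En n)) : Prop :=
  S ⊆ H ∧ ∃ φ : En (n - 1) →ᵃⁱ[ℝ] En n,
    Set.range (φ : En (n - 1) → En n) = H ∧ IsConvexQuadric ((φ : En (n - 1) → En n) ⁻¹' S)

/-- The hyperplane H(u) = {x : ⟨x, u⟩ = δ(u)} associated to a unit vector u. -/
def sphHyp {n : ℕ} (δ : sphere (0 : En n) 1 → ℝ) (u : sphere (0 : En n) 1) : Set (En n) :=
  {x : En n | ⟪x, (u : En n)⟫ = δ u}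


set_option linter.unusedSectionVars false
section Quad
variable {E : Type*} [NormedAddCommGroup E] [InnerProductSpace ℝ E]

/-- Quadratic functions (degree at most two) on a vector space. -/
def IsQuad (q : E → ℝ) : Prop :=
  ∃ (B : E →ₗ[ℝ] E →ₗ[ℝ] ℝ) (l : E →ₗ[ℝ] ℝ) (c : ℝ), ∀ x, q x = B x x + l x + c

lemma IsQuad.recenter {q : E → ℝ} (hq : IsQuad q) (e : E) :
    ∃ (B : E →ₗ[ℝ] E →ₗ[ℝ] ℝ) (l : E →ₗ[ℝ] ℝ), ∀ v, q (e + v) = q e + l v + B v v := by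
  obtain ⟨B, l, c, h⟩ := hq
  refine ⟨B, l + B e + B.flip e, fun v => ?_⟩
  simp only [h, map_add, LinearMap.add_apply, LinearMap.flip_apply]
  ring

lemma IsQuad.add {q r : E → ℝ} (hq : IsQuad q) (hr : IsQuad r) : IsQuad (fun x => q x + r x) := by
  obtain ⟨B, l, c, h⟩ := hq
  obtain ⟨B', l', c', h'⟩ := hr
  refine ⟨B + B', l + l', c + c', fun x => ?_⟩
  simp only [h, h', LinearMap.add_apply]; ring

lemma IsQuad.smul {q : E → ℝ} (hq : IsQuad q) (a : ℝ) : IsQuad (fun x => a * q x) := by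
  obtain ⟨B, l, c, h⟩ := hq
  refine ⟨a • B, a • l, a * c, fun x => ?_⟩
  simp only [h, LinearMap.smul_apply, smul_eq_mul]; ring

lemma IsQuad.sub {q r : E → ℝ} (hq : IsQuad q) (hr : IsQuad r) : IsQuad (fun x => q x - r x) := by
  have := hq.add (hr.smul (-1))
  convert this using 2; ring

lemma IsQuad.neg {q : E → ℝ} (hq : IsQuad q) : IsQuad (fun x => - q x) := by
  have := hq.smul (-1)
  convert this using 2; ring

lemma IsQuad.congr {q r : E → ℝ} (hq : IsQuad q) (h : ∀ x, r x = q x) : IsQuad r := by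
  have : r = q := funext h
  rwa [this]

lemma IsQuad.comp_aff {F : Type*} [NormedAddCommGroup F] [InnerProductSpace ℝ F]
    {q : E → ℝ} (hq : IsQuad q) (A : F →ₗ[ℝ] E) (e : E) :
    IsQuad (fun x => q (e + A x)) := by
  obtain ⟨B, l, h⟩ := hq.recenter e
  refine ⟨B.compl₁₂ A A, l ∘ₗ A, q e, fun x => ?_⟩
  simp only [h, LinearMap.compl₁₂_apply, LinearMap.comp_apply]; ring

lemma isQuad_const (c : ℝ) : IsQuad (fun _ : E => c) :=
  ⟨0, 0, c, by simp⟩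

lemma isQuad_lin_mul (l m : E →ₗ[ℝ] ℝ) (c d : ℝ) : IsQuad (fun x => (l x + c) * (m x + d)) := by
  refine ⟨LinearMap.mk₂ ℝ (fun x y => l x * m y) ?_ ?_ ?_ ?_, d • l + c • m, c * d, fun x => ?_⟩
  · intros; simp; ring
  · intros; simp; ring
  · intros; simp; ring
  · intros; simp; ring
  · simp; ring

lemma IsQuad.continuous [FiniteDimensional ℝ E] {q : E → ℝ} (hq : IsQuad q) : Continuous q := by
  obtain ⟨B, l, c, h⟩ := hq
  have hq : q = fun x => B x x + l x + c := funext h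
  have h1 : Continuous (fun x => (LinearMap.toContinuousLinearMap (B x)) x) := by
    have : Continuous (fun x => (LinearMap.toContinuousLinearMap (B x) : E →L[ℝ] ℝ)) :=
      LinearMap.continuous_of_finiteDimensional
        (((LinearMap.toContinuousLinearMap : (E →ₗ[ℝ] ℝ) ≃ₗ[ℝ] _).toLinearMap) ∘ₗ B)
    exact this.clm_apply continuous_id
  have h2 : Continuous l := LinearMap.continuous_of_finiteDimensional l
  rw [hq]
  exact (h1.add h2).add continuous_const

/-- A quadratic function on a line: coefficients. -/
lemma IsQuad.line {q : E → ℝ} (hq : IsQuad q) (z d : E) :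
    ∃ a b : ℝ, ∀ t : ℝ, q (z + t • d) = q z + t * a + t ^ 2 * b := by
  obtain ⟨B, l, h⟩ := hq.recenter z
  refine ⟨l d, B d d, fun t => ?_⟩
  rw [h]; simp; ring

lemma quad_three_zeros {a b s t : ℝ} (hs : s ≠ 0) (ht : t ≠ 0) (hst : s ≠ t)
    (h1 : s * a + s ^ 2 * b = 0) (h2 : t * a + t ^ 2 * b = 0) : a = 0 ∧ b = 0 := by
  have h1' : a + s * b = 0 := by
    have : s * (a + s * b) = 0 := by linarith
    simpa [hs] using this
  have h2' : a + t * b = 0 := by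
    have : t * (a + t * b) = 0 := by linarith
    simpa [ht] using this
  have : (s - t) * b = 0 := by linarith
  have hb : b = 0 := by
    rcases mul_eq_zero.1 this with h | h
    · exact absurd (sub_eq_zero.1 h) hst
    · exact h
  subst hb
  exact ⟨by linarith, rfl⟩

lemma IsQuad.line_zero {q : E → ℝ} (hq : IsQuad q) {z d : E} {s t : ℝ} (hs : s ≠ 0) (ht : t ≠ 0)
    (hst : s ≠ t) (h0 : q z = 0) (h1 : q (z + s • d) = 0) (h2 : q (z + t • d) = 0) (r : ℝ) :
    q (z + r • d) = 0 := by
  obtain ⟨a, b, h⟩ := hq.line z d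
  rw [h, h0] at h1 h2
  obtain ⟨ha, hb⟩ := quad_three_zeros (a := a) (b := b) hs ht hst (by linarith) (by linarith)
  rw [h, h0, ha, hb]; ring

end Quad

section ConvexBasics
variable {E : Type*} [NormedAddCommGroup E] [InnerProductSpace ℝ E]

lemma exit_point {K : Set E} (hcl : IsClosed K) {z d : E} {T : ℝ} (hT : 0 ≤ T)
    (hz : z ∈ K) (hT' : z + T • d ∉ K) : ∃ t, 0 ≤ t ∧ t < T ∧ z + t • d ∈ frontier K := by
  have hc : Continuous (fun t : ℝ => z + t • d) := by fun_prop
  have hS : IsCompact (Icc 0 T ∩ (fun t : ℝ => z + t • d) ⁻¹' K) :=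
    isCompact_Icc.inter_right (hcl.preimage hc)
  obtain ⟨t, ⟨⟨ht0, htT⟩, htK⟩, hmax⟩ := hS.exists_isGreatest ⟨0, ⟨le_refl _, hT⟩, by simpa using hz⟩
  have htT' : t < T := by
    rcases htT.lt_or_eq with h | h
    · exact h
    · subst h; exact absurd htK hT'
  refine ⟨t, ht0, htT', ?_⟩
  rw [hcl.frontier_eq]
  refine ⟨htK, fun hIn => ?_⟩
  have ho : IsOpen ((fun t : ℝ => z + t • d) ⁻¹' interior K) := isOpen_interior.preimage hc
  obtain ⟨ε, hε, hb⟩ := Metric.isOpen_iff.1 ho t hIn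
  have h1 : t + min (ε / 2) (T - t) ∈ Metric.ball t ε := by
    rw [Metric.mem_ball, Real.dist_eq, add_sub_cancel_left, abs_of_nonneg]
    · exact lt_of_le_of_lt (min_le_left _ _) (by linarith)
    · exact le_min (by linarith) (by linarith)
  have h3 : z + (t + min (ε / 2) (T - t)) • d ∈ K := interior_subset (s := K) (hb h1)
  have h2 := hmax (show t + min (ε / 2) (T - t) ∈ _ from ⟨⟨?_, ?_⟩, h3⟩)
  · have : 0 < min (ε / 2) (T - t) := lt_min (by linarith) (by linarith)
    linarith
  · have : 0 < min (ε / 2) (T - t) := lt_min (by linarith) (by linarith)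
    linarith
  · have := min_le_right (ε / 2) (T - t)
    linarith

lemma exit_int {K : Set E} (hcl : IsClosed K) {z d : E} {T : ℝ} (hT : 0 ≤ T)
    (hz : z ∈ interior K) (hT' : z + T • d ∉ K) :
    ∃ t, 0 < t ∧ t < T ∧ z + t • d ∈ frontier K := by
  obtain ⟨t, h0, h1, h2⟩ := exit_point hcl hT (interior_subset hz) hT'
  refine ⟨t, lt_of_le_of_ne h0 ?_, h1, h2⟩
  rintro rfl
  rw [hcl.frontier_eq] at h2
  exact h2.2 (by simpa using hz)

lemma frontier_sub {K : Set E} (hcl : IsClosed K) {x : E} (hx : x ∈ frontier K) : x ∈ K := by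
  rw [hcl.frontier_eq] at hx; exact hx.1

lemma frontier_nint {K : Set E} (hcl : IsClosed K) {x : E} (hx : x ∈ frontier K) :
    x ∉ interior K := by
  rw [hcl.frontier_eq] at hx; exact hx.2

lemma mem_frontier_of {K : Set E} (hcl : IsClosed K) {x : E} (hx : x ∈ K)
    (hxi : x ∉ interior K) : x ∈ frontier K := by
  rw [hcl.frontier_eq]; exact ⟨hx, hxi⟩

/-- Points strictly between an interior point and a point of `K`. -/
lemma ray_int {K : Set E} (hK : Convex ℝ K) {z d : E} {s t : ℝ} (hz : z ∈ interior K)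
    (h0 : 0 ≤ s) (hst : s < t) (ht : z + t • d ∈ K) : z + s • d ∈ interior K := by
  have htp : 0 < t := lt_of_le_of_lt h0 hst
  have := hK.add_smul_sub_mem_interior ht hz (t := 1 - s / t)
    ⟨by rw [sub_pos, div_lt_one htp]; exact hst, by
      have : 0 ≤ s / t := by positivity
      linarith⟩
  convert this using 1
  have : s = t + (1 - s / t) * (- t) := by field_simp; ring
  conv_lhs => rw [this]
  module

/-- Beyond a frontier point. -/
lemma ray_out {K : Set E} (hK : Convex ℝ K) (hcl : IsClosed K) {z d : E} {s t : ℝ}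
    (hz : z ∈ interior K) (h0 : 0 ≤ s) (hst : s < t) (hs : z + s • d ∈ frontier K) :
    z + t • d ∉ K := fun h => frontier_nint hcl hs (ray_int hK hz h0 hst h)

lemma seg_int {K : Set E} (hK : Convex ℝ K) {z x : E} {s : ℝ} (hz : z ∈ interior K)
    (h0 : 0 ≤ s) (h1 : s < 1) (hx : x ∈ K) : z + s • (x - z) ∈ interior K :=
  ray_int hK hz h0 h1 (by simpa using hx)

lemma exists_normal [CompleteSpace E] {K : Set E} (hK : Convex ℝ K) (hcl : IsClosed K) {e : E}
    (he : e ∈ frontier K) : ∃ N : E, ∀ x ∈ interior K, ⟪N, x - e⟫ < 0 := by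
  obtain ⟨f, hf⟩ := geometric_hahn_banach_open_point hK.interior isOpen_interior
    (frontier_nint hcl he)
  refine ⟨(InnerProductSpace.toDual ℝ E).symm f, fun x hx => ?_⟩
  rw [InnerProductSpace.toDual_symm_apply, map_sub]
  linarith [hf x hx]

lemma closure_int {K : Set E} (hK : Convex ℝ K) (hcl : IsClosed K) (hIn : (interior K).Nonempty) :
    closure (interior K) = K := by
  rw [hK.closure_interior_eq_closure_of_nonempty_interior hIn, hcl.closure_eq]

lemma normal_le {K : Set E} (hK : Convex ℝ K) (hcl : IsClosed K) (hIn : (interior K).Nonempty)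
    {e N : E} (h : ∀ x ∈ interior K, ⟪N, x - e⟫ < 0) {x : E} (hx : x ∈ K) : ⟪N, x - e⟫ ≤ 0 := by
  have hc : IsClosed {x : E | ⟪N, x - e⟫ ≤ 0} := isClosed_le (by fun_prop) continuous_const
  have : closure (interior K) ⊆ {x : E | ⟪N, x - e⟫ ≤ 0} :=
    hc.closure_subset_iff.2 fun x hx => (h x hx).le
  rw [closure_int hK hcl hIn] at this
  exact this hx

end ConvexBasics

section OmSection
open Filter Topology
variable {E : Type*} [NormedAddCommGroup E] [InnerProductSpace ℝ E]

/-- Directions in which `K` is strongly bounded (interior of the barrier cone). -/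
def Om (K : Set E) : Set E := {y | ∃ c > 0, ∃ C : ℝ, ∀ x ∈ K, ⟪x, y⟫ ≤ C - c * ‖x‖}

lemma Om_isOpen (K : Set E) : IsOpen (Om K) := by
  rw [Metric.isOpen_iff]
  rintro y ⟨c, hc, C, h⟩
  refine ⟨c / 2, by linarith, fun y' hy' => ⟨c / 2, by linarith, C, fun x hx => ?_⟩⟩
  rw [Metric.mem_ball, dist_eq_norm] at hy'
  have h1 : ⟪x, y'⟫ = ⟪x, y⟫ + ⟪x, y' - y⟫ := by rw [← inner_add_right]; congr 1; abel
  have h2 := real_inner_le_norm x (y' - y)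
  have h3 : ‖x‖ * ‖y' - y‖ ≤ ‖x‖ * (c / 2) := by gcongr
  have := h x hx
  linarith

lemma Om_add {K : Set E} {y y' : E} (hy : y ∈ Om K) {C' : ℝ} (hy' : ∀ x ∈ K, ⟪x, y'⟫ ≤ C') :
    y + y' ∈ Om K := by
  obtain ⟨c, hc, C, h⟩ := hy
  refine ⟨c, hc, C + C', fun x hx => ?_⟩
  rw [inner_add_right]
  linarith [h x hx, hy' x hx]

lemma Om_smul {K : Set E} {y : E} (hy : y ∈ Om K) {t : ℝ} (ht : 0 < t) : t • y ∈ Om K := by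
  obtain ⟨c, hc, C, h⟩ := hy
  refine ⟨t * c, by positivity, t * C, fun x hx => ?_⟩
  rw [inner_smul_right]
  have := mul_le_mul_of_nonneg_left (h x hx) ht.le
  linarith

lemma Om_bdd {K : Set E} {y : E} (hy : y ∈ Om K) : ∃ C, ∀ x ∈ K, ⟪x, y⟫ ≤ C := by
  obtain ⟨c, hc, C, h⟩ := hy
  exact ⟨C, fun x hx => (h x hx).trans (by have := norm_nonneg x; nlinarith)⟩

lemma Om_convex (K : Set E) : Convex ℝ (Om K) := by
  rw [convex_iff_forall_pos]
  intro y hy y' hy' a b ha hb _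
  obtain ⟨C, hC⟩ := Om_bdd (Om_smul hy' hb)
  exact Om_add (Om_smul hy ha) hC

lemma Om_ray {K : Set E} {y : E} (hy : y ∈ Om K) (z : E) {d : E} (hd : d ≠ 0)
    (hdy : 0 ≤ ⟪d, y⟫) : ∃ T > (0:ℝ), z + T • d ∉ K := by
  obtain ⟨c, hc, C, h⟩ := hy
  have hdn : 0 < ‖d‖ := norm_pos_iff.2 hd
  set T := (|C - ⟪z, y⟫ + c * ‖z‖| + 1) / (c * ‖d‖) with hT
  have hTp : 0 < T := by positivity
  refine ⟨T, hTp, fun hx => ?_⟩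
  have h1 := h _ hx
  rw [inner_add_left, inner_smul_left] at h1
  simp only [conj_trivial] at h1
  have h2 : T * ‖d‖ - ‖z‖ ≤ ‖z + T • d‖ := by
    have := norm_sub_norm_le (T • d) (-z)
    rw [norm_neg, norm_smul, Real.norm_of_nonneg hTp.le, sub_neg_eq_add, add_comm (T • d)] at this
    exact this
  have h3 : c * (T * ‖d‖) = |C - ⟪z, y⟫ + c * ‖z‖| + 1 := by
    rw [hT]; field_simp
  have h4 := le_abs_self (C - ⟪z, y⟫ + c * ‖z‖)
  have h5 : 0 ≤ T * ⟪d, y⟫ := by positivity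
  have h6 := mul_le_mul_of_nonneg_left h2 hc.le
  nlinarith

/-- Every line parallel to the hyperplane orthogonal to `y` leaves `K`. -/
def BL (K : Set E) (y : E) : Prop := ∀ z d : E, ⟪d, y⟫ = 0 → d ≠ 0 → ∃ T > (0:ℝ), z + T • d ∉ K

lemma BL_of_Om {K : Set E} {y : E} (hy : y ∈ Om K) : BL K y := fun z _ h0 hd =>
  Om_ray hy z hd h0.ge

lemma BL_of_neg_Om {K : Set E} {y : E} (hy : -y ∈ Om K) : BL K y := fun z _ h0 hd =>
  Om_ray hy z hd (by rw [inner_neg_right, h0]; simp)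

lemma chord_aux {K : Set E} (hcl : IsClosed K) {y0 z d0 : E} (hy0 : y0 ∈ Om K)
    (hz : z ∈ interior K) (hd0 : d0 ≠ 0) (hd : ⟪d0, y0⟫ = 0) (v : E) :
    ∀ᶠ ε : ℝ in 𝓝 0, ∃ t > (0:ℝ), z + t • (d0 + ε • v) ∈ frontier K ∧
      |⟪t • (d0 + ε • v), y0⟫| ≤ 1 := by
  obtain ⟨T, hT, hTK⟩ := Om_ray hy0 z hd0 hd.ge
  have c1 : Continuous (fun ε : ℝ => z + T • (d0 + ε • v)) := by fun_prop
  have e1 : ∀ᶠ ε : ℝ in 𝓝 0, z + T • (d0 + ε • v) ∉ K := by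
    have := (hcl.isOpen_compl.preimage c1).mem_nhds (x := (0 : ℝ)) (by simpa using hTK)
    exact this
  have c2 : Continuous (fun ε : ℝ => T * |ε * ⟪v, y0⟫|) := by fun_prop
  have e2 : ∀ᶠ ε : ℝ in 𝓝 0, T * |ε * ⟪v, y0⟫| < 1 := by
    have := ((isOpen_Iio (a := (1:ℝ))).preimage c2).mem_nhds (x := (0 : ℝ)) (by simp)
    exact this
  filter_upwards [e1, e2] with ε h1 h2
  obtain ⟨t, ht0, htT, ht⟩ := exit_int hcl hT.le hz h1
  refine ⟨t, ht0, ht, ?_⟩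
  rw [inner_smul_left, inner_add_left, hd, inner_smul_left]
  simp only [conj_trivial, zero_add]
  rw [abs_mul, abs_of_pos ht0]
  have : t * |ε * ⟪v, y0⟫| ≤ T * |ε * ⟪v, y0⟫| := by gcongr
  linarith

lemma lemma_UF {K : Set E} (hcl : IsClosed K) {y0 z d0 : E} (hy0 : y0 ∈ Om K)
    (hz : z ∈ interior K) (hd0 : d0 ≠ 0) (hd : ⟪d0, y0⟫ = 0) (v : E) {g : E → ℝ} (hg : IsQuad g)
    (hgz : g z = 0)
    (h : ∀ a b : ℝ, z + (a • d0 + b • v) ∈ frontier K → |⟪a • d0 + b • v, y0⟫| ≤ 1 →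
      g (z + (a • d0 + b • v)) = 0) : g (z + v) = 0 := by
  have e1 := chord_aux hcl hy0 hz hd0 hd v
  have e2 := chord_aux hcl hy0 hz (neg_ne_zero.2 hd0) (by rw [inner_neg_left, hd, neg_zero]) (-v)
  obtain ⟨B, l, hB⟩ := hg.recenter z
  have e3 : ∀ᶠ ε : ℝ in 𝓝 0, l (d0 + ε • v) = 0 ∧ B (d0 + ε • v) (d0 + ε • v) = 0 := by
    filter_upwards [e1, e2] with ε ⟨t, ht0, ht, hti⟩ ⟨s, hs0, hs, hsi⟩
    have k1 : t • (d0 + ε • v) = t • d0 + (t * ε) • v := by module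
    have k2 : s • (-d0 + ε • -v) = (-s) • d0 + (-s * ε) • v := by module
    rw [k1] at ht hti
    rw [k2] at hs hsi
    have g1 := h _ _ ht hti
    have g2 := h _ _ hs hsi
    have k2' : (-s) • d0 + (-s * ε) • v = (-s) • (d0 + ε • v) := by module
    rw [← k1, hB, hgz] at g1
    rw [k2', hB, hgz] at g2
    simp only [map_smul, LinearMap.smul_apply, smul_eq_mul] at g1 g2
    exact quad_three_zeros (s := t) (t := -s) ht0.ne' (by linarith) (by linarith)
      (by linarith) (by linarith)
  obtain ⟨r, hr, hb⟩ := Metric.eventually_nhds_iff.1 e3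
  have q0 := hb (y := 0) (by simpa using hr)
  have q1 := hb (y := r / 2) (by rw [Real.dist_eq, sub_zero, abs_of_pos] <;> linarith)
  have q2 := hb (y := - (r / 2)) (by rw [Real.dist_eq, sub_zero, abs_neg, abs_of_pos] <;> linarith)
  simp only [map_add, map_smul, LinearMap.add_apply, LinearMap.smul_apply, smul_eq_mul, zero_mul,
    add_zero] at q0 q1 q2
  have hl : l v = 0 := by
    have : r * l v = 0 := by linarith [q1.1, q0.1]
    rcases mul_eq_zero.1 this with h | h
    · exact absurd h hr.ne'
    · exact h
  have hBv : B v v = 0 := by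
    have : r ^ 2 * B v v = 0 := by nlinarith [q1.2, q0.2, q2.2]
    rcases mul_eq_zero.1 this with h | h
    · exact absurd h (by positivity)
    · exact h
  rw [hB, hgz, hl, hBv]; ring

lemma two_exits {K : Set E} (hcl : IsClosed K) {y z d : E} (hy : BL K y)
    (hz : z ∈ interior K) (hd : ⟪d, y⟫ = 0) (hd0 : d ≠ 0) :
    ∃ t > (0:ℝ), ∃ s < (0:ℝ), z + t • d ∈ frontier K ∧ z + s • d ∈ frontier K := by
  obtain ⟨T, hT, hTK⟩ := hy z d hd hd0
  obtain ⟨S, hS, hSK⟩ := hy z (-d) (by rw [inner_neg_left, hd, neg_zero]) (neg_ne_zero.2 hd0)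
  obtain ⟨t, ht0, -, ht⟩ := exit_int hcl hT.le hz hTK
  obtain ⟨s, hs0, -, hs⟩ := exit_int hcl hS.le hz hSK
  refine ⟨t, ht0, -s, by linarith, ht, ?_⟩
  rwa [neg_smul, ← smul_neg]

lemma lemma_P {K : Set E} (hcl : IsClosed K) {y z x : E} (hy : BL K y)
    (hz : z ∈ interior K) (hx : ⟪x, y⟫ = ⟪z, y⟫) {g : E → ℝ} (hg : IsQuad g) (hgz : g z = 0)
    (h : ∀ t : ℝ, z + t • (x - z) ∈ frontier K → g (z + t • (x - z)) = 0) : g x = 0 := by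
  by_cases hxz : x - z = 0
  · rw [sub_eq_zero.1 hxz]; exact hgz
  obtain ⟨t, ht, s, hs, h1, h2⟩ := two_exits hcl hy hz (by rw [inner_sub_left, hx, sub_self]) hxz
  have := hg.line_zero ht.ne' hs.ne (by linarith) hgz (h _ h1) (h _ h2) 1
  simpa using this

end OmSection

section Planes
open Filter Topology
variable {E : Type*} [NormedAddCommGroup E] [InnerProductSpace ℝ E]

/-- `q` describes the section of `K` by the hyperplane `⟪x, y⟫ = D y`. -/
def VQ (K : Set E) (D : E → ℝ) (y : E) (q : E → ℝ) : Prop :=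
  IsQuad q ∧ (∀ x ∈ frontier K, ⟪x, y⟫ = D y → q x = 0) ∧
    (∀ x ∈ interior K, ⟪x, y⟫ = D y → 0 < q x)

/-- Two hyperplanes meet inside the interior of `K`. -/
def Cross (K : Set E) (D : E → ℝ) (y y' : E) : Prop :=
  ∃ x ∈ interior K, ⟪x, y⟫ = D y ∧ ⟪x, y'⟫ = D y'

lemma Cross.symm {K : Set E} {D : E → ℝ} {y y' : E} (h : Cross K D y y') : Cross K D y' y := by
  obtain ⟨x, h1, h2, h3⟩ := h
  exact ⟨x, h1, h3, h2⟩

/-- Three linearly independent vectors, via dual vectors. -/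
def Ind3 (y1 y2 y3 : E) : Prop := ∃ e1 e2 e3 : E,
  (⟪e1, y1⟫ = 1 ∧ ⟪e1, y2⟫ = 0 ∧ ⟪e1, y3⟫ = 0) ∧
  (⟪e2, y1⟫ = 0 ∧ ⟪e2, y2⟫ = 1 ∧ ⟪e2, y3⟫ = 0) ∧
  (⟪e3, y1⟫ = 0 ∧ ⟪e3, y2⟫ = 0 ∧ ⟪e3, y3⟫ = 1)

lemma Ind3.swap12 {y1 y2 y3 : E} (h : Ind3 y1 y2 y3) : Ind3 y2 y1 y3 := by
  obtain ⟨e1, e2, e3, ⟨a1, a2, a3⟩, ⟨b1, b2, b3⟩, ⟨c1, c2, c3⟩⟩ := h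
  exact ⟨e2, e1, e3, ⟨b2, b1, b3⟩, ⟨a2, a1, a3⟩, ⟨c2, c1, c3⟩⟩

lemma Ind3.swap23 {y1 y2 y3 : E} (h : Ind3 y1 y2 y3) : Ind3 y1 y3 y2 := by
  obtain ⟨e1, e2, e3, ⟨a1, a2, a3⟩, ⟨b1, b2, b3⟩, ⟨c1, c2, c3⟩⟩ := h
  exact ⟨e1, e3, e2, ⟨a1, a3, a2⟩, ⟨c1, c3, c2⟩, ⟨b1, b3, b2⟩⟩

/-- Hyperplanes whose section of the frontier of `K` lies in the quadric `Q = 0`. -/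
def GQ (K : Set E) (D : E → ℝ) (Q : E → ℝ) : Set E :=
  {y | ∀ x ∈ frontier K, ⟪x, y⟫ = D y → Q x = 0}

lemma quad_two_planes {g : E → ℝ} (hg : IsQuad g) {y1 y2 e1 e2 : E} {c1 c2 : ℝ}
    (h11 : ⟪e1, y1⟫ = 1) (h12 : ⟪e1, y2⟫ = 0) (h21 : ⟪e2, y1⟫ = 0) (h22 : ⟪e2, y2⟫ = 1)
    (hz1 : ∀ x, ⟪x, y1⟫ = c1 → g x = 0) (hz2 : ∀ x, ⟪x, y2⟫ = c2 → g x = 0) :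
    ∃ β : ℝ, ∀ x, g x = β * ((⟪x, y1⟫ - c1) * (⟪x, y2⟫ - c2)) := by
  obtain ⟨B, l, c, h⟩ := hg
  refine ⟨B e1 e2 + B e2 e1, fun x => ?_⟩
  set a := ⟪x, y1⟫ - c1 with ha
  set b := ⟪x, y2⟫ - c2 with hb
  set p := x - a • e1 - b • e2 with hp
  have hx : x = p + a • e1 + b • e2 := by rw [hp]; abel
  have i1 : ∀ s : ℝ, ⟪p + s • e1, y2⟫ = c2 := fun s => by
    rw [hp]; simp only [inner_add_left, inner_sub_left, inner_smul_left, conj_trivial, h12, h22]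
    rw [hb]; ring
  have i2 : ∀ s : ℝ, ⟪p + s • e2, y1⟫ = c1 := fun s => by
    rw [hp]; simp only [inner_add_left, inner_sub_left, inner_smul_left, conj_trivial, h11, h21]
    rw [ha]; ring
  have z0 := hz2 _ (i1 0)
  have z1 := hz2 _ (i1 1)
  have z2 := hz2 _ (i1 (-1))
  have z3 := hz1 _ (i2 1)
  have z4 := hz1 _ (i2 (-1))
  rw [hx, h]
  rw [h] at z0 z1 z2 z3 z4
  simp only [map_add, map_smul, LinearMap.add_apply, LinearMap.smul_apply, smul_eq_mul] at z0 z1 z2 z3 z4 ⊢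
  have k1 : B e1 e1 = 0 := by linarith
  have k2 : B e2 e2 = 0 := by linarith
  have k3 : B p e1 + B e1 p + l e1 = 0 := by linarith
  have k4 : B p e2 + B e2 p + l e2 = 0 := by linarith
  have k5 : B p p + l p + c = 0 := by linarith
  linear_combination a * k3 + b * k4 + k5 + a ^ 2 * k1 + b ^ 2 * k2

lemma quad_three_planes {g : E → ℝ} (hg : IsQuad g) {y1 y2 y3 : E} (hI : Ind3 y1 y2 y3)
    {c1 c2 c3 : ℝ} (hz1 : ∀ x, ⟪x, y1⟫ = c1 → g x = 0) (hz2 : ∀ x, ⟪x, y2⟫ = c2 → g x = 0)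
    (hz3 : ∀ x, ⟪x, y3⟫ = c3 → g x = 0) (x : E) : g x = 0 := by
  obtain ⟨e1, e2, e3, ⟨a1, a2, a3⟩, ⟨b1, b2, b3⟩, ⟨d1, d2, d3⟩⟩ := hI
  obtain ⟨β, hβ⟩ := quad_two_planes hg a1 a2 b1 b2 hz1 hz2
  have := hz3 ((c1 + 1) • e1 + (c2 + 1) • e2 + c3 • e3) (by
    simp only [inner_add_left, inner_smul_left, conj_trivial, a3, b3, d3]; ring)
  rw [hβ] at this
  simp only [inner_add_left, inner_smul_left, conj_trivial, a1, a2, a3, b1, b2, b3, d1, d2, d3] at this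
  have : β = 0 := by linarith
  rw [hβ, this]; ring

/-- Projection along `e` to the hyperplane `⟪x, y⟫ = c`. -/
def pr (y : E) (c : ℝ) (e x : E) : E := x - (⟪x, y⟫ - c) • e

lemma pr_inner (y : E) (c : ℝ) (e x y' : E) :
    ⟪pr y c e x, y'⟫ = ⟪x, y'⟫ - (⟪x, y⟫ - c) * ⟪e, y'⟫ := by
  simp [pr, inner_sub_left, inner_smul_left]

lemma pr_self {y : E} {c : ℝ} {e x : E} (h : ⟪x, y⟫ = c) : pr y c e x = x := by
  simp [pr, h]

lemma IsQuad.comp_pr {q : E → ℝ} (hq : IsQuad q) (y : E) (c : ℝ) (e : E) :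
    IsQuad (fun x => q (pr y c e x)) := by
  refine (hq.comp_aff (LinearMap.id - (innerₛₗ ℝ y).smulRight e) (c • e)).congr fun x => ?_
  congr 1
  simp only [pr, LinearMap.sub_apply, LinearMap.id_apply, LinearMap.smulRight_apply,
    innerₛₗ_apply_apply, real_inner_comm x y]
  module

/-- Quadratic function on a hyperplane vanishing on three further hyperplanes. -/
lemma quad_three_planes_on {g : E → ℝ} (hg : IsQuad g) {y1 y2 y3 y4 : E} {c1 c2 c3 c4 : ℝ}
    (h124 : Ind3 y1 y2 y4) (h134 : Ind3 y1 y3 y4) (h234 : Ind3 y2 y3 y4)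
    (hz1 : ∀ x, ⟪x, y4⟫ = c4 → ⟪x, y1⟫ = c1 → g x = 0)
    (hz2 : ∀ x, ⟪x, y4⟫ = c4 → ⟪x, y2⟫ = c2 → g x = 0)
    (hz3 : ∀ x, ⟪x, y4⟫ = c4 → ⟪x, y3⟫ = c3 → g x = 0) (x : E) (hx : ⟪x, y4⟫ = c4) : g x = 0 := by
  obtain ⟨e1, e2, e4, ⟨a1, a2, a4⟩, ⟨b1, b2, b4⟩, ⟨d1, d2, d4⟩⟩ := h124
  obtain ⟨f1, f3, f4, ⟨p1, p3, p4⟩, ⟨q1, q3, q4⟩, ⟨r1, r3, r4⟩⟩ := h134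
  obtain ⟨f2, -, -, ⟨s2, s3, s4⟩, -, -⟩ := h234
  have hin : ∀ x, ⟪pr y4 c4 e4 x, y4⟫ = c4 := fun x => by rw [pr_inner, d4]; ring
  obtain ⟨β, hβ⟩ := quad_two_planes (c1 := c1) (c2 := c2) (hg.comp_pr y4 c4 e4) a1 a2 b1 b2
    (fun x h => hz1 _ (hin x) (by rw [pr_inner, d1, h]; ring))
    (fun x h => hz2 _ (hin x) (by rw [pr_inner, d2, h]; ring))
  have hβ' : ∀ x, ⟪x, y4⟫ = c4 → g x = β * ((⟪x, y1⟫ - c1) * (⟪x, y2⟫ - c2)) := fun x h => by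
    have := hβ x; rwa [pr_self h] at this
  set z := c3 • f3 + c4 • f4 with hz
  have hP : ∀ a b : ℝ, β * ((⟪z + (a • f1 + b • f2), y1⟫ - c1) *
      (⟪z + (a • f1 + b • f2), y2⟫ - c2)) = 0 := fun a b => by
    have k4 : ⟪z + (a • f1 + b • f2), y4⟫ = c4 := by
      simp only [hz, inner_add_left, inner_smul_left, conj_trivial, p4, s4, q4, r4]; ring
    rw [← hβ' _ k4]
    refine hz3 _ k4 ?_
    simp only [hz, inner_add_left, inner_smul_left, conj_trivial, p3, s3, q3, r3]; ring
  have hβ0 : β = 0 := by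
    by_contra hne
    have hP' : ∀ a b : ℝ, (⟪z, y1⟫ + (a + b * ⟪f2, y1⟫) - c1) *
        (⟪z, y2⟫ + (a * ⟪f1, y2⟫ + b) - c2) = 0 := fun a b => by
      have := hP a b
      simp only [inner_add_left z, inner_add_left (a • f1), inner_smul_left, conj_trivial, p1, s2,
        mul_one] at this
      exact (mul_eq_zero.1 this).resolve_left hne
    have t0 := hP' 0 0
    have t1 := hP' 1 0
    have t2 := hP' (-1) 0
    have t3 := hP' 0 1
    have t4 := hP' 0 (-1)
    have t5 := hP' 1 1
    have u1 : ⟪f1, y2⟫ = 0 := by linear_combination (t1 + t2) / 2 - t0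
    have u2 : ⟪f2, y1⟫ = 0 := by linear_combination (t3 + t4) / 2 - t0
    have u3 : (1 : ℝ) + ⟪f2, y1⟫ * ⟪f1, y2⟫ = 0 := by linear_combination t5 - t1 - t3 + t0
    rw [u1] at u3
    norm_num at u3
  rw [hβ' x hx, hβ0]; ring

end Planes

section DerHol
open Filter Topology
variable {E : Type*} [NormedAddCommGroup E] [InnerProductSpace ℝ E]

lemma Der {K : Set E} (hK : Convex ℝ K) (hcl : IsClosed K) {D : E → ℝ} {y : E} {q : E → ℝ}
    (hq : VQ K D y q) (hy : BL K y) {e z N : E} (he : e ∈ frontier K) (hey : ⟪e, y⟫ = D y)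
    (hz : z ∈ interior K) (hzy : ⟪z, y⟫ = D y) (hN : ∀ x ∈ interior K, ⟪N, x - e⟫ < 0)
    {B : E →ₗ[ℝ] E →ₗ[ℝ] ℝ} {l : E →ₗ[ℝ] ℝ} (hB : ∀ v, q (e + v) = q e + l v + B v v) :
    0 < l (z - e) ∧ ∀ v, ⟪v, y⟫ = 0 → ⟪N, v⟫ * l (z - e) = ⟪N, z - e⟫ * l v := by
  obtain ⟨hqq, hqf, hqi⟩ := hq
  have hqe : q e = 0 := hqf e he hey
  set v0 := z - e with hv0
  have hv0y : ⟪v0, y⟫ = 0 := by rw [hv0, inner_sub_left, hzy, hey, sub_self]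
  have hez : e + v0 = z := by rw [hv0]; abel
  have hv00 : v0 ≠ 0 := by
    intro h
    rw [h, add_zero] at hez
    exact frontier_nint hcl he (hez ▸ hz)
  have hf : ∀ t : ℝ, q (e + t • v0) = t * l v0 + t ^ 2 * B v0 v0 := fun t => by
    rw [hB, hqe]; simp; ring
  -- (a)
  have hl0 : 0 < l v0 := by
    obtain ⟨T, hT, hTK⟩ := hy z v0 hv0y hv00
    obtain ⟨t, ht0, -, ht⟩ := exit_int hcl hT.le hz hTK
    have h1 : q (e + (1 + t) • v0) = 0 := by
      have : e + (1 + t) • v0 = z + t • v0 := by rw [← hez]; module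
      rw [this]
      refine hqf _ ht ?_
      rw [inner_add_left, inner_smul_left, hv0y, hzy]; simp
    have h2 : 0 < q (e + (1 : ℝ) • v0) := by
      rw [one_smul, hez]; exact hqi z hz hzy
    rw [hf] at h1 h2
    have h3 : (1 + t) * (l v0 + (1 + t) * B v0 v0) = 0 := by linarith
    have h4 : l v0 + (1 + t) * B v0 v0 = 0 := by
      rcases mul_eq_zero.1 h3 with h | h
      · linarith
      · exact h
    have h5 : 0 < t * (- B v0 v0) := by linarith
    have h6 : 0 < - B v0 v0 := (mul_pos_iff_of_pos_left ht0).1 h5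
    nlinarith
  have hN0 : ⟪N, v0⟫ < 0 := hN z hz
  -- (b)
  have hb : ∀ v, ⟪v, y⟫ = 0 → 0 < l v → ⟪N, v⟫ ≤ 0 := by
    intro v hvy hlv
    set M := |B v0 v0| + |B v0 v + B v v0| + |B v v| + 1 with hM
    have hMp : 0 < M := by positivity
    set m := min (l v0) (l v) with hm
    have hmp : 0 < m := lt_min hl0 hlv
    set t := min (1 / 2) (m / (2 * M)) with ht
    have htp : 0 < t := lt_min (by norm_num) (by positivity)
    have ht1 : t ≤ 1 / 2 := min_le_left _ _
    have ht2 : t * M < m := by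
      have : t ≤ m / (2 * M) := min_le_right _ _
      calc t * M ≤ m / (2 * M) * M := by gcongr
        _ = m / 2 := by field_simp
        _ < m := by linarith
    have hpos : ∀ s : ℝ, 0 ≤ s → s ≤ 1 → 0 < q (e + (t • v0 + s • (t • (v - v0)))) := by
      intro s hs0 hs1
      have e1 : t • v0 + s • (t • (v - v0)) = t • ((1 - s) • v0 + s • v) := by module
      rw [e1, hB, hqe]
      simp only [map_smul, map_add, LinearMap.add_apply, LinearMap.smul_apply, smul_eq_mul]
      have l1 : m ≤ (1 - s) * l v0 + s * l v := by
        have a1 : (1 - s) * m ≤ (1 - s) * l v0 :=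
          mul_le_mul_of_nonneg_left (min_le_left _ _) (by linarith)
        have a2 : s * m ≤ s * l v := mul_le_mul_of_nonneg_left (min_le_right _ _) hs0
        linarith
      have l2 : -M ≤ (1 - s) ^ 2 * B v0 v0 + (1 - s) * s * (B v0 v + B v v0) + s ^ 2 * B v v := by
        have b1 : -|B v0 v0| ≤ (1 - s) ^ 2 * B v0 v0 := by
          have c1 : (1 - s) ^ 2 ≤ 1 := by nlinarith
          have c2 := neg_abs_le (B v0 v0)
          have c3 := abs_nonneg (B v0 v0)
          nlinarith [sq_nonneg (1 - s)]
        have b2 : -|B v0 v + B v v0| ≤ (1 - s) * s * (B v0 v + B v v0) := by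
          have c1 : (1 - s) * s ≤ 1 := by nlinarith
          have c0 : 0 ≤ (1 - s) * s := mul_nonneg (by linarith) hs0
          have c2 := neg_abs_le (B v0 v + B v v0)
          have c3 := abs_nonneg (B v0 v + B v v0)
          nlinarith
        have b3 : -|B v v| ≤ s ^ 2 * B v v := by
          have c1 : s ^ 2 ≤ 1 := by nlinarith
          have c2 := neg_abs_le (B v v)
          have c3 := abs_nonneg (B v v)
          nlinarith [sq_nonneg s]
        linarith
      have l3 : 0 < ((1 - s) * l v0 + s * l v) + t * ((1 - s) ^ 2 * B v0 v0 +
          (1 - s) * s * (B v0 v + B v v0) + s ^ 2 * B v v) := by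
        have := mul_le_mul_of_nonneg_left l2 htp.le
        linarith
      have := mul_pos htp l3
      linarith
    have hzt : e + t • v0 ∈ interior K := by
      have := ray_int hK (z := z) (d := -v0) (s := 1 - t) (t := 1) hz (by linarith) (by linarith)
        (by rw [one_smul, ← hez, add_neg_cancel_right]; exact frontier_sub hcl he)
      convert this using 1
      rw [← hez]; module
    have hin : e + t • v ∈ K := by
      by_contra hout
      obtain ⟨s, hs0, hs1, hs⟩ := exit_point hcl (z := e + t • v0) (d := t • (v - v0)) (T := 1)
        zero_le_one (interior_subset hzt) (by
          have : e + t • v0 + (1 : ℝ) • (t • (v - v0)) = e + t • v := by module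
          rwa [this])
      have := hpos s hs0 hs1.le
      rw [add_assoc] at hs
      have h0 := hqf _ hs (by
        simp only [inner_add_left, inner_smul_left, inner_sub_left, hvy, hv0y, hey]; simp)
      linarith
    have := normal_le hK hcl ⟨z, hz⟩ hN hin
    rw [add_sub_cancel_left, inner_smul_right] at this
    by_contra hc
    push Not at hc
    have := mul_pos htp hc
    linarith
  -- (c)
  have hc : ∀ v, ⟪v, y⟫ = 0 → l v = 0 → ⟪N, v⟫ ≤ 0 := by
    intro v hvy hlv
    by_contra hc
    push Not at hc
    set ε := ⟪N, v⟫ / (2 * (-⟪N, v0⟫)) with hε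
    have hp : 0 < 2 * (-⟪N, v0⟫) := by linarith
    have hεp : 0 < ε := by positivity
    have h1 := hb (v + ε • v0) (by rw [inner_add_left, inner_smul_left, hvy, hv0y]; simp)
      (by rw [map_add, hlv, map_smul, zero_add, smul_eq_mul]; positivity)
    rw [inner_add_right, inner_smul_right] at h1
    have h2 : ε * (2 * (-⟪N, v0⟫)) = ⟪N, v⟫ := div_mul_cancel₀ _ hp.ne'
    linarith
  refine ⟨hl0, fun v hvy => ?_⟩
  set r := l v / l v0 with hr
  have hr' : r * l v0 = l v := by rw [hr]; field_simp
  have hw1 : ⟪v - r • v0, y⟫ = 0 := by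
    rw [inner_sub_left, inner_smul_left, hvy, hv0y]; simp
  have hw2 : l (v - r • v0) = 0 := by
    rw [map_sub, map_smul, smul_eq_mul, hr', sub_self]
  have g1 := hc _ hw1 hw2
  have g2 := hc (-(v - r • v0)) (by rw [inner_neg_left, hw1, neg_zero]) (by rw [map_neg, hw2, neg_zero])
  rw [inner_neg_right] at g2
  rw [inner_sub_right, inner_smul_right] at g1 g2
  have g3 : ⟪N, v⟫ = r * ⟪N, v0⟫ := by linarith
  rw [g3, ← hr']; ring

lemma VQ.smul {K : Set E} {D : E → ℝ} {y : E} {q : E → ℝ} (hq : VQ K D y q) {κ : ℝ} (hκ : 0 < κ) :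
    VQ K D y (fun x => κ * q x) := by
  refine ⟨hq.1.smul κ, fun x h1 h2 => ?_, fun x h1 h2 => mul_pos hκ (hq.2.2 x h1 h2)⟩
  simp [hq.2.1 x h1 h2]

lemma VQ_match {K : Set E} (hcl : IsClosed K) {D : E → ℝ} {y y' : E} {q q' : E → ℝ}
    (hq : VQ K D y q) (hq' : VQ K D y' q') (hy : BL K y) (hc : Cross K D y y') :
    ∃ κ > 0, ∀ x, ⟪x, y⟫ = D y → ⟪x, y'⟫ = D y' → q x = κ * q' x := by
  obtain ⟨z, hz, hzy, hzy'⟩ := hc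
  have p1 := hq.2.2 z hz hzy
  have p2 := hq'.2.2 z hz hzy'
  refine ⟨q z / q' z, by positivity, fun x hx hx' => ?_⟩
  have hg : IsQuad (fun x => q x - q z / q' z * q' x) := hq.1.sub (hq'.1.smul _)
  have := lemma_P hcl hy hz (x := x) (by rw [hx, hzy]) hg (by field_simp; ring)
    (fun t ht => by
      have i1 : ⟪z + t • (x - z), y⟫ = D y := by
        simp only [inner_add_left, inner_smul_left, inner_sub_left, hx, hzy]; simp
      have i2 : ⟪z + t • (x - z), y'⟫ = D y' := by
        simp only [inner_add_left, inner_smul_left, inner_sub_left, hx', hzy']; simp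
      rw [hq.2.1 _ ht i1, hq'.2.1 _ ht i2]; ring)
  linarith

lemma lin_part_eq {q r : E → ℝ} {o v : E} {κ : ℝ} {B B' : E →ₗ[ℝ] E →ₗ[ℝ] ℝ} {l l' : E →ₗ[ℝ] ℝ}
    (hB : ∀ v, q (o + v) = q o + l v + B v v) (hB' : ∀ v, r (o + v) = r o + l' v + B' v v)
    (h1 : q (o + v) = κ * r (o + v)) (h2 : q (o + -v) = κ * r (o + -v)) :
    l v = κ * l' v := by
  rw [hB, hB'] at h1 h2
  simp only [map_neg, LinearMap.neg_apply] at h1 h2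
  linarith

lemma Hol [CompleteSpace E] {K : Set E} (hK : Convex ℝ K) (hcl : IsClosed K) {D : E → ℝ}
    {y1 y2 y3 : E} {q1 q2 q3 : E → ℝ}
    (hq1 : VQ K D y1 q1) (hq2 : VQ K D y2 q2) (hq3 : VQ K D y3 q3)
    (hy1 : BL K y1) (hy2 : BL K y2) (hy3 : BL K y3)
    (c12 : Cross K D y1 y2) (c13 : Cross K D y1 y3) (c23 : Cross K D y2 y3)
    (hI : Ind3 y1 y2 y3)
    (h12 : ∀ x, ⟪x, y1⟫ = D y1 → ⟪x, y2⟫ = D y2 → q1 x = q2 x)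
    (h13 : ∀ x, ⟪x, y1⟫ = D y1 → ⟪x, y3⟫ = D y3 → q1 x = q3 x) :
    ∀ x, ⟪x, y2⟫ = D y2 → ⟪x, y3⟫ = D y3 → q2 x = q3 x := by
  obtain ⟨κ, hκ, hm⟩ := VQ_match hcl hq3 hq2 hy3 c23.symm
  suffices hk1 : κ = 1 by
    intro x h2 h3
    rw [hm x h3 h2, hk1, one_mul]
  obtain ⟨e1, e2, e3, ⟨a1, a2, a3⟩, ⟨b1, b2, b3⟩, ⟨d1, d2, d3⟩⟩ := hI
  obtain ⟨o, ho1, ho2, ho3⟩ : ∃ o : E, ⟪o, y1⟫ = D y1 ∧ ⟪o, y2⟫ = D y2 ∧ ⟪o, y3⟫ = D y3 := by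
    refine ⟨D y1 • e1 + D y2 • e2 + D y3 • e3, ?_, ?_, ?_⟩ <;>
    · simp only [inner_add_left, inner_smul_left, a1, a2, a3, b1, b2, b3, d1, d2, d3]; simp
  have k2 := h12 o ho1 ho2
  have k3 := h13 o ho1 ho3
  have k4 := hm o ho3 ho2
  obtain ⟨z12, i12, j1, j2⟩ := c12
  obtain ⟨z13, i13, m1, m3⟩ := c13
  obtain ⟨z23, i23, n2, n3⟩ := c23
  by_cases hq0 : q1 o = 0
  swap
  · rw [← k2, ← k3] at k4
    have : (κ - 1) * q1 o = 0 := by linarith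
    rcases mul_eq_zero.1 this with h | h
    · linarith
    · exact absurd h hq0
  have hof : o ∈ frontier K := by
    have hp := hq1.2.2 z12 i12 j1
    have hne : o - z12 ≠ 0 := by
      intro h
      rw [sub_eq_zero.1 h] at hq0
      linarith
    have hin : ∀ t : ℝ, ⟪z12 + t • (o - z12), y1⟫ = D y1 := fun t => by
      simp only [inner_add_left, inner_smul_left, inner_sub_left, ho1, j1]; simp
    obtain ⟨t, ht, s, hs, f1, f2⟩ := two_exits hcl hy1 i12 (d := o - z12)
      (by rw [inner_sub_left, ho1, j1, sub_self]) hne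
    by_cases ht1 : t = 1
    · rw [ht1] at f1; simpa using f1
    · exfalso
      have z1 := hq1.2.1 _ f1 (hin t)
      have z2 := hq1.2.1 _ f2 (hin s)
      have := hq1.1.line_zero (z := o) (d := o - z12) (s := t - 1) (t := s - 1)
        (sub_ne_zero.2 ht1) (by linarith) (by linarith) hq0
        (by rw [← z1]; congr 1; module) (by rw [← z2]; congr 1; module) (-1)
      have e : o + (-1 : ℝ) • (o - z12) = z12 := by module
      rw [e] at this
      linarith
  obtain ⟨N, hN⟩ := exists_normal hK hcl hof
  obtain ⟨B1, l1, hB1⟩ := hq1.1.recenter o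
  obtain ⟨B2, l2, hB2⟩ := hq2.1.recenter o
  obtain ⟨B3, l3, hB3⟩ := hq3.1.recenter o
  have hv : ∀ {z y : E} {c : ℝ}, ⟪z, y⟫ = c → ⟪o, y⟫ = c → ⟪z - o, y⟫ = 0 := by
    intro z y c h1 h2; rw [inner_sub_left, h1, h2, sub_self]
  have hp : ∀ {z y : E} {c : ℝ}, ⟪z, y⟫ = c → ⟪o, y⟫ = c → ⟪o + (z - o), y⟫ = c := by
    intro z y c h1 h2; rw [inner_add_left, hv h1 h2, h2, add_zero]
  have hn : ∀ {z y : E} {c : ℝ}, ⟪z, y⟫ = c → ⟪o, y⟫ = c → ⟪o + -(z - o), y⟫ = c := by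
    intro z y c h1 h2; rw [inner_add_left, inner_neg_left, hv h1 h2, h2, neg_zero, add_zero]
  have L12 : l1 (z12 - o) = 1 * l2 (z12 - o) := lin_part_eq hB1 hB2
    (by rw [one_mul]; exact h12 _ (hp j1 ho1) (hp j2 ho2))
    (by rw [one_mul]; exact h12 _ (hn j1 ho1) (hn j2 ho2))
  have L13 : l1 (z13 - o) = 1 * l3 (z13 - o) := lin_part_eq hB1 hB3
    (by rw [one_mul]; exact h13 _ (hp m1 ho1) (hp m3 ho3))
    (by rw [one_mul]; exact h13 _ (hn m1 ho1) (hn m3 ho3))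
  have L23 : l3 (z23 - o) = κ * l2 (z23 - o) := lin_part_eq hB3 hB2
    (hm _ (hp n3 ho3) (hp n2 ho2)) (hm _ (hn n3 ho3) (hn n2 ho2))
  obtain ⟨A1, A2⟩ := Der hK hcl hq1 hy1 hof ho1 i12 j1 hN hB1
  obtain ⟨A3, A4⟩ := Der hK hcl hq2 hy2 hof ho2 i12 j2 hN hB2
  obtain ⟨A5, A6⟩ := Der hK hcl hq3 hy3 hof ho3 i13 m3 hN hB3
  obtain ⟨A7, -⟩ := Der hK hcl hq2 hy2 hof ho2 i23 n2 hN hB2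
  have R1 := A2 _ (hv m1 ho1)
  have R2 := A4 _ (hv n2 ho2)
  have R3 := A6 _ (hv n3 ho3)
  have N12 := hN _ i12
  have N13 := hN _ i13
  rw [one_mul] at L12 L13
  rw [L12, L13] at R1
  rw [L23] at R3
  have hprod : 0 < ⟪N, z13 - o⟫ * ⟪N, z12 - o⟫ * l2 (z23 - o) :=
    mul_pos (mul_pos_of_neg_of_neg N13 N12) A7
  have : (κ - 1) * (⟪N, z13 - o⟫ * ⟪N, z12 - o⟫ * l2 (z23 - o)) = 0 := by
    linear_combination ⟪N, z13 - o⟫ * R2 - ⟪N, z12 - o⟫ * R3 - ⟪N, z23 - o⟫ * R1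
  rcases mul_eq_zero.1 this with h | h
  · linarith
  · exact absurd h hprod.ne'

end DerHol

section TripleFour
open Filter Topology
variable {E : Type*} [NormedAddCommGroup E] [InnerProductSpace ℝ E]

/-- A hyperplane with a good quadratic section. -/
def Good (K : Set E) (D : E → ℝ) (y : E) : Prop := BL K y ∧ ∃ q, VQ K D y q

lemma Triple [CompleteSpace E] {K : Set E} (hK : Convex ℝ K) (hcl : IsClosed K) {D : E → ℝ}
    {y1 y2 y3 : E} (g1 : Good K D y1) (g2 : Good K D y2) (g3 : Good K D y3)
    (c12 : Cross K D y1 y2) (c13 : Cross K D y1 y3) (c23 : Cross K D y2 y3)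
    (hI : Ind3 y1 y2 y3) :
    ∃ Q : E → ℝ, IsQuad Q ∧ (∃ x, Q x ≠ 0) ∧ y1 ∈ GQ K D Q ∧ y2 ∈ GQ K D Q ∧ y3 ∈ GQ K D Q := by
  obtain ⟨hy1, q1, hq1⟩ := g1
  obtain ⟨hy2, r2, hr2⟩ := g2
  obtain ⟨hy3, r3, hr3⟩ := g3
  obtain ⟨κ2, hκ2, m12⟩ := VQ_match hcl hq1 hr2 hy1 c12
  obtain ⟨κ3, hκ3, m13⟩ := VQ_match hcl hq1 hr3 hy1 c13
  obtain ⟨q2, hq2, h12⟩ : ∃ q2, VQ K D y2 q2 ∧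
      ∀ x, ⟪x, y1⟫ = D y1 → ⟪x, y2⟫ = D y2 → q1 x = q2 x := ⟨_, hr2.smul hκ2, m12⟩
  obtain ⟨q3, hq3, h13⟩ : ∃ q3, VQ K D y3 q3 ∧
      ∀ x, ⟪x, y1⟫ = D y1 → ⟪x, y3⟫ = D y3 → q1 x = q3 x := ⟨_, hr3.smul hκ3, m13⟩
  have h23 := Hol hK hcl hq1 hq2 hq3 hy1 hy2 hy3 c12 c13 c23 hI h12 h13
  obtain ⟨e1, e2, e3, ⟨a1, a2, a3⟩, ⟨b1, b2, b3⟩, ⟨d1, d2, d3⟩⟩ := hI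
  set p1 := pr y1 (D y1) e1 with hp1
  set p2 := pr y2 (D y2) e2 with hp2
  set p3 := pr y3 (D y3) e3 with hp3
  have i11 : ∀ x, ⟪p1 x, y1⟫ = D y1 := fun x => by rw [hp1, pr_inner, a1]; ring
  have i12 : ∀ x, ⟪p1 x, y2⟫ = ⟪x, y2⟫ := fun x => by rw [hp1, pr_inner, a2]; ring
  have i13 : ∀ x, ⟪p1 x, y3⟫ = ⟪x, y3⟫ := fun x => by rw [hp1, pr_inner, a3]; ring
  have i21 : ∀ x, ⟪p2 x, y1⟫ = ⟪x, y1⟫ := fun x => by rw [hp2, pr_inner, b1]; ring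
  have i22 : ∀ x, ⟪p2 x, y2⟫ = D y2 := fun x => by rw [hp2, pr_inner, b2]; ring
  have i23 : ∀ x, ⟪p2 x, y3⟫ = ⟪x, y3⟫ := fun x => by rw [hp2, pr_inner, b3]; ring
  have i31 : ∀ x, ⟪p3 x, y1⟫ = ⟪x, y1⟫ := fun x => by rw [hp3, pr_inner, d1]; ring
  have i32 : ∀ x, ⟪p3 x, y2⟫ = ⟪x, y2⟫ := fun x => by rw [hp3, pr_inner, d2]; ring
  have i33 : ∀ x, ⟪p3 x, y3⟫ = D y3 := fun x => by rw [hp3, pr_inner, d3]; ring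
  have s1 : ∀ x, ⟪x, y1⟫ = D y1 → p1 x = x := fun x h => pr_self h
  have s2 : ∀ x, ⟪x, y2⟫ = D y2 → p2 x = x := fun x h => pr_self h
  have s3 : ∀ x, ⟪x, y3⟫ = D y3 → p3 x = x := fun x h => pr_self h
  set Q : E → ℝ := fun x => (q1 (p1 x) + q2 (p2 x) + q3 (p3 x)) +
    (-(q1 (p1 (p2 x)) + q1 (p1 (p3 x)) + q2 (p2 (p3 x))) + q1 (p1 (p2 (p3 x)))) with hQ
  have Q1 : ∀ x, ⟪x, y1⟫ = D y1 → Q x = q1 x := fun x h => by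
    simp only [hQ]
    rw [s1 x h, s1 (p2 x) (by rw [i21, h]), s1 (p3 x) (by rw [i31, h]),
      s1 (p2 (p3 x)) (by rw [i21, i31, h]),
      h12 (p2 x) (by rw [i21, h]) (i22 x), h13 (p3 x) (by rw [i31, h]) (i33 x),
      h12 (p2 (p3 x)) (by rw [i21, i31, h]) (i22 _)]
    ring
  have Q2 : ∀ x, ⟪x, y2⟫ = D y2 → Q x = q2 x := fun x h => by
    simp only [hQ]
    rw [s2 x h, s2 (p3 x) (by rw [i32, h]), h23 (p3 x) (by rw [i32, h]) (i33 x)]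
    ring
  have Q3 : ∀ x, ⟪x, y3⟫ = D y3 → Q x = q3 x := fun x h => by
    simp only [hQ]
    rw [s3 x h]
    ring
  refine ⟨Q, ?_, ?_, ?_, ?_, ?_⟩
  · exact (((hq1.1.comp_pr _ _ _).add (hq2.1.comp_pr _ _ _)).add (hq3.1.comp_pr _ _ _)).add
      ((((((hq1.1.comp_pr _ _ _).comp_pr _ _ _).add ((hq1.1.comp_pr _ _ _).comp_pr _ _ _)).add
        ((hq2.1.comp_pr _ _ _).comp_pr _ _ _)).neg).add
        (((hq1.1.comp_pr _ _ _).comp_pr _ _ _).comp_pr _ _ _))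
  · obtain ⟨z, hz, h1, h2⟩ := c12
    exact ⟨z, by rw [Q1 z h1]; exact (hq1.2.2 z hz h1).ne'⟩
  · exact fun x hx h => by rw [Q1 x h]; exact hq1.2.1 x hx h
  · exact fun x hx h => by rw [Q2 x h]; exact hq2.2.1 x hx h
  · exact fun x hx h => by rw [Q3 x h]; exact hq3.2.1 x hx h

lemma seg_inner {z x y : E} {c : ℝ} (h1 : ⟪z, y⟫ = c) (h2 : ⟪x, y⟫ = c) (t : ℝ) :
    ⟪z + t • (x - z), y⟫ = c := by
  simp only [inner_add_left, inner_smul_left, inner_sub_left, h1, h2]; simp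

lemma GQ_zero_on {K : Set E} (hcl : IsClosed K) {D : E → ℝ} {y z : E} (hy : BL K y)
    {g : E → ℝ} (hg : IsQuad g) (hG : y ∈ GQ K D g) (hz : z ∈ interior K) (hzy : ⟪z, y⟫ = D y)
    (hgz : g z = 0) (x : E) (hx : ⟪x, y⟫ = D y) : g x = 0 :=
  lemma_P hcl hy hz (by rw [hx, hzy]) hg hgz fun t ht => hG _ ht (seg_inner hzy hx t)

lemma UZ {K : Set E} (hcl : IsClosed K) {D : E → ℝ} {y1 y2 y3 : E}
    (b1 : BL K y1) (b2 : BL K y2) (b3 : BL K y3) {g : E → ℝ} (hg : IsQuad g)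
    (h1 : y1 ∈ GQ K D g) (h2 : y2 ∈ GQ K D g) (h3 : y3 ∈ GQ K D g) (c13 : Cross K D y1 y3)
    (hI : Ind3 y1 y2 y3) {z : E} (hz : z ∈ interior K) (hz1 : ⟪z, y1⟫ = D y1)
    (hz2 : ⟪z, y2⟫ = D y2) (hgz : g z = 0) (x : E) : g x = 0 := by
  have H1 := GQ_zero_on hcl b1 hg h1 hz hz1 hgz
  have H2 := GQ_zero_on hcl b2 hg h2 hz hz2 hgz
  obtain ⟨w, hw, hw1, hw3⟩ := c13
  have H3 := GQ_zero_on hcl b3 hg h3 hw hw3 (H1 w hw1)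
  exact quad_three_planes hg hI H1 H2 H3 x

lemma Uniq {K : Set E} (hcl : IsClosed K) {D : E → ℝ} {y1 y2 y3 : E}
    (b1 : BL K y1) (b2 : BL K y2) (b3 : BL K y3) {Q Q' : E → ℝ} (hQ : IsQuad Q) (hQ' : IsQuad Q')
    (n : ∃ x, Q x ≠ 0) (n' : ∃ x, Q' x ≠ 0)
    (h1 : y1 ∈ GQ K D Q) (h2 : y2 ∈ GQ K D Q) (h3 : y3 ∈ GQ K D Q)
    (h1' : y1 ∈ GQ K D Q') (h2' : y2 ∈ GQ K D Q') (h3' : y3 ∈ GQ K D Q')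
    (c12 : Cross K D y1 y2) (c13 : Cross K D y1 y3) (hI : Ind3 y1 y2 y3) :
    ∃ c ≠ 0, ∀ x, Q' x = c * Q x := by
  obtain ⟨z, hz, hz1, hz2⟩ := c12
  have hne : Q z ≠ 0 := fun h => by
    obtain ⟨x, hx⟩ := n
    exact hx (UZ hcl b1 b2 b3 hQ h1 h2 h3 c13 hI hz hz1 hz2 h x)
  have hg : IsQuad (fun x => Q' x - Q' z / Q z * Q x) := hQ'.sub (hQ.smul _)
  have hh : ∀ {y}, y ∈ GQ K D Q → y ∈ GQ K D Q' → y ∈ GQ K D (fun x => Q' x - Q' z / Q z * Q x) := by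
    intro y a b x hx hxy
    simp only
    rw [a x hx hxy, b x hx hxy]; ring
  have key := UZ hcl b1 b2 b3 hg (hh h1 h1') (hh h2 h2') (hh h3 h3') c13 hI hz hz1 hz2
    (by field_simp; ring)
  refine ⟨Q' z / Q z, ?_, fun x => by linarith [key x]⟩
  intro h0
  obtain ⟨x, hx⟩ := n'
  have := key x
  rw [h0] at this
  exact hx (by linarith)

lemma GQ_congr {K : Set E} {D : E → ℝ} {Q Q' : E → ℝ} {c : ℝ} (hc : c ≠ 0)
    (h : ∀ x, Q' x = c * Q x) : GQ K D Q' = GQ K D Q := by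
  ext y
  simp only [GQ, mem_setOf_eq, h, mul_eq_zero, hc, false_or]

lemma VQ_of {K : Set E} (hK : Convex ℝ K) (hcl : IsClosed K) {D : E → ℝ} {y z : E} (hy : BL K y)
    {Q : E → ℝ} (hQ : IsQuad Q) (hG : y ∈ GQ K D Q) (hz : z ∈ interior K) (hzy : ⟪z, y⟫ = D y)
    (hp : 0 < Q z) : VQ K D y Q := by
  refine ⟨hQ, hG, fun x hx hxy => ?_⟩
  by_contra hneg
  push Not at hneg
  obtain ⟨a, b, hab⟩ := hQ.line z (x - z)
  have hc : Continuous (fun t : ℝ => Q (z + t • (x - z))) := by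
    have : (fun t : ℝ => Q (z + t • (x - z))) = fun t => Q z + t * a + t ^ 2 * b := funext hab
    rw [this]; fun_prop
  have := intermediate_value_Icc' (zero_le_one (α := ℝ)) hc.continuousOn
  obtain ⟨t, ht, ht0⟩ := this (show (0 : ℝ) ∈ _ by simpa using ⟨hneg, hp.le⟩)
  have hw : z + t • (x - z) ∈ interior K :=
    hK.interior.add_smul_sub_mem hz hx ht
  have := GQ_zero_on hcl hy hQ hG hw (seg_inner hzy hxy t) ht0 z hzy
  linarith

lemma Four_aux [CompleteSpace E] {K : Set E} (hK : Convex ℝ K) (hcl : IsClosed K) {D : E → ℝ}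
    {y1 y2 y3 y4 : E} (b1 : BL K y1) (b2 : BL K y2) (b3 : BL K y3) (g4 : Good K D y4)
    (c13 : Cross K D y1 y3) (c14 : Cross K D y1 y4)
    (c23 : Cross K D y2 y3) (c24 : Cross K D y2 y4) (c34 : Cross K D y3 y4)
    (i124 : Ind3 y1 y2 y4) (i134 : Ind3 y1 y3 y4) (i234 : Ind3 y2 y3 y4)
    {Q : E → ℝ} (hQ : IsQuad Q) 
    (h1 : y1 ∈ GQ K D Q) (h2 : y2 ∈ GQ K D Q) (h3 : y3 ∈ GQ K D Q)
    {z : E} (hz : z ∈ interior K) (hz1 : ⟪z, y1⟫ = D y1)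
    (hz2 : ⟪z, y2⟫ = D y2) (hpos : 0 < Q z) : y4 ∈ GQ K D Q := by
  have v1 := VQ_of hK hcl b1 hQ h1 hz hz1 hpos
  have v2 := VQ_of hK hcl b2 hQ h2 hz hz2 hpos
  have v3 : VQ K D y3 Q := by
    obtain ⟨w, hw, hw1, hw3⟩ := c13
    exact VQ_of hK hcl b3 hQ h3 hw hw3 (v1.2.2 w hw hw1)
  obtain ⟨b4, r, hr⟩ := g4
  obtain ⟨κ, hκ, m⟩ := VQ_match hcl v1 hr b1 c14
  have v4 := hr.smul hκ
  have c12 : Cross K D y1 y2 := ⟨z, hz, hz1, hz2⟩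
  have H2 := Hol hK hcl v1 v2 v4 b1 b2 b4 c12 c14 c24 i124 (fun _ _ _ => rfl) m
  have H3 := Hol hK hcl v1 v3 v4 b1 b3 b4 c13 c14 c34 i134 (fun _ _ _ => rfl) m
  have key := quad_three_planes_on (hQ.sub v4.1) i124 i134 i234 (c1 := D y1) (c2 := D y2)
    (c3 := D y3) (c4 := D y4)
    (fun x h4 h1 => sub_eq_zero.2 (m x h1 h4)) (fun x h4 h2 => sub_eq_zero.2 (H2 x h2 h4))
    (fun x h4 h3 => sub_eq_zero.2 (H3 x h3 h4))
  intro x hx hxy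
  rw [sub_eq_zero.1 (key x hxy)]
  exact v4.2.1 x hx hxy

lemma Four [CompleteSpace E] {K : Set E} (hK : Convex ℝ K) (hcl : IsClosed K) {D : E → ℝ}
    {y1 y2 y3 y4 : E} (b1 : BL K y1) (b2 : BL K y2) (b3 : BL K y3) (g4 : Good K D y4)
    (c12 : Cross K D y1 y2) (c13 : Cross K D y1 y3) (c14 : Cross K D y1 y4)
    (c23 : Cross K D y2 y3) (c24 : Cross K D y2 y4) (c34 : Cross K D y3 y4)
    (i123 : Ind3 y1 y2 y3) (i124 : Ind3 y1 y2 y4) (i134 : Ind3 y1 y3 y4) (i234 : Ind3 y2 y3 y4)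
    {Q : E → ℝ} (hQ : IsQuad Q) (n : ∃ x, Q x ≠ 0)
    (h1 : y1 ∈ GQ K D Q) (h2 : y2 ∈ GQ K D Q) (h3 : y3 ∈ GQ K D Q) : y4 ∈ GQ K D Q := by
  obtain ⟨z, hz, hz1, hz2⟩ := c12
  have hne : Q z ≠ 0 := fun h => by
    obtain ⟨x, hx⟩ := n
    exact hx (UZ hcl b1 b2 b3 hQ h1 h2 h3 c13 i123 hz hz1 hz2 h x)
  rcases lt_or_gt_of_ne hne with h | h
  · have e : GQ K D (fun x => (-1) * Q x) = GQ K D Q := GQ_congr (c := -1) (by norm_num) fun x => rfl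
    rw [← e] at h1 h2 h3 ⊢
    exact Four_aux hK hcl b1 b2 b3 g4 c13 c14 c23 c24 c34 i124 i134 i234 (hQ.smul (-1)) h1 h2 h3
      hz hz1 hz2 (by linarith)
  · exact Four_aux hK hcl b1 b2 b3 g4 c13 c14 c23 c24 c34 i124 i134 i234 hQ h1 h2 h3 hz hz1 hz2 h

lemma GQ_closed [FiniteDimensional ℝ E] {K : Set E} (hK : Convex ℝ K) (hcl : IsClosed K)
    {D : E → ℝ} {y z : E} (hy : y ≠ 0) (hD : ContinuousAt D y) (hz : z ∈ interior K)
    (hzy : ⟪z, y⟫ = D y) {Q : E → ℝ} (hQ : IsQuad Q) (hyc : y ∈ closure (GQ K D Q)) :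
    y ∈ GQ K D Q := by
  intro p hp hpy
  have hQc := hQ.continuous
  have hcl0 : IsClosed {x | Q x = 0} := isClosed_eq hQc continuous_const
  suffices p ∈ closure {x | Q x = 0} by rw [hcl0.closure_eq] at this; exact this
  rw [Metric.mem_closure_iff]
  intro η hη
  -- points on both sides
  have hzp : z + (1 : ℝ) • (p - z) = p := by module
  obtain ⟨ε, hε, hε1, hεη⟩ : ∃ ε : ℝ, 0 < ε ∧ ε < 1 ∧ ε * ‖p - z‖ < η := by
    refine ⟨min (1 / 2) (η / (2 * (‖p - z‖ + 1))), lt_min (by norm_num) (by positivity),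
      lt_of_le_of_lt (min_le_left _ _) (by norm_num), ?_⟩
    calc min (1 / 2) (η / (2 * (‖p - z‖ + 1))) * ‖p - z‖
        ≤ (η / (2 * (‖p - z‖ + 1))) * ‖p - z‖ := by gcongr; exact min_le_right _ _
      _ ≤ (η / (2 * (‖p - z‖ + 1))) * (‖p - z‖ + 1) := by gcongr; linarith
      _ = η / 2 := by field_simp
      _ < η := by linarith
  set a := z + (1 - ε) • (p - z) with ha
  set b := z + (1 + ε) • (p - z) with hb
  have haK : a ∈ interior K := ray_int hK hz (by linarith) (by linarith : 1 - ε < 1)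
    (by rw [hzp]; exact frontier_sub hcl hp)
  have hbK : b ∉ K := ray_out hK hcl hz zero_le_one (by linarith : 1 < 1 + ε) (by rw [hzp]; exact hp)
  have hay : ⟪a, y⟫ = D y := seg_inner hzy hpy _
  have hby : ⟪b, y⟫ = D y := seg_inner hzy hpy _
  have hap : a ∈ Metric.ball p η := by
    have : a - p = (-ε) • (p - z) := by rw [ha]; module
    rw [Metric.mem_ball, dist_eq_norm, this, norm_smul, norm_neg, Real.norm_of_nonneg hε.le]
    exact hεη
  have hbp : b ∈ Metric.ball p η := by
    have : b - p = ε • (p - z) := by rw [hb]; module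
    rw [Metric.mem_ball, dist_eq_norm, this, norm_smul, Real.norm_of_nonneg hε.le]
    exact hεη
  have hyy : ⟪y, y⟫ ≠ 0 := inner_self_ne_zero.2 hy
  have hcont : ∀ c : E, ⟪c, y⟫ = D y →
      Tendsto (fun y' => c + ((D y' - ⟪c, y'⟫) / ⟪y, y'⟫) • y) (𝓝 y) (𝓝 c) := by
    intro c hc
    have h1 : ContinuousAt (fun y' => c + ((D y' - ⟪c, y'⟫) / ⟪y, y'⟫) • y) y := by
      refine continuousAt_const.add (ContinuousAt.smul (ContinuousAt.div (hD.sub ?_) ?_ hyy)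
        continuousAt_const)
      · fun_prop
      · fun_prop
    have h2 := h1.tendsto
    simp only [hc, sub_self, zero_div, zero_smul, add_zero] at h2
    exact h2
  have ev1 : ∀ᶠ y' in 𝓝 y, a + ((D y' - ⟪a, y'⟫) / ⟪y, y'⟫) • y ∈ interior K ∩ Metric.ball p η :=
    (hcont a hay).eventually ((isOpen_interior.inter Metric.isOpen_ball).mem_nhds ⟨haK, hap⟩)
  have ev2 : ∀ᶠ y' in 𝓝 y, b + ((D y' - ⟪b, y'⟫) / ⟪y, y'⟫) • y ∈ Kᶜ ∩ Metric.ball p η :=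
    (hcont b hby).eventually ((hcl.isOpen_compl.inter Metric.isOpen_ball).mem_nhds ⟨hbK, hbp⟩)
  have ev3 : ∀ᶠ y' in 𝓝 y, ⟪y, y'⟫ ≠ 0 := by
    have : ContinuousAt (fun y' => ⟪y, y'⟫) y := by fun_prop
    exact this.eventually_ne hyy
  obtain ⟨y', ⟨⟨h1, h2⟩, ⟨h3, h4⟩, h5⟩, h6⟩ :=
    (((ev1.and (ev2.and ev3)).and_frequently (mem_closure_iff_frequently.1 hyc)).exists)
  set a' := a + ((D y' - ⟪a, y'⟫) / ⟪y, y'⟫) • y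
  set b' := b + ((D y' - ⟪b, y'⟫) / ⟪y, y'⟫) • y
  have hin : ∀ c : E, ⟪c + ((D y' - ⟪c, y'⟫) / ⟪y, y'⟫) • y, y'⟫ = D y' := fun c => by
    rw [inner_add_left, inner_smul_left]; simp only [conj_trivial]; field_simp; ring
  obtain ⟨t, ht0, ht1, ht⟩ := exit_point hcl (z := a') (d := b' - a') zero_le_one
    (interior_subset h1) (by rw [one_smul, add_sub_cancel]; exact h3)
  refine ⟨a' + t • (b' - a'), h6 _ ht (seg_inner (hin a) (hin b) t), ?_⟩
  have := (convex_ball p η).add_smul_sub_mem h2 h4 (t := t) ⟨ht0, ht1.le⟩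
  rwa [Metric.mem_ball, dist_comm] at this

end TripleFour

section P7
open Filter Topology
variable {W : Type*} [NormedAddCommGroup W] [NormedSpace ℝ W]

lemma level_inf (hdim : 1 < Module.rank ℝ W) {x : W} {r : ℝ} {φ : W → ℝ}
    (hφ : ContinuousOn φ (ball x r)) {a b : W} (ha : a ∈ ball x r) (hb : b ∈ ball x r) {c : ℝ}
    (hac : φ a < c) (hcb : c < φ b) : {w | w ∈ ball x r ∧ φ w = c}.Infinite := by
  by_contra hfin
  rw [Set.not_infinite] at hfin
  have hr : 0 < r := pos_of_mem_ball ha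
  set e := OpenPartialHomeomorph.univBall x r with he
  have hsrc : e.source = univ := OpenPartialHomeomorph.univBall_source x r
  have htgt : e.target = ball x r := OpenPartialHomeomorph.univBall_target x hr
  have hinj : InjOn e univ := by rw [← hsrc]; exact e.injOn
  have hT : (e ⁻¹' {w | w ∈ ball x r ∧ φ w = c}).Finite :=
    hfin.preimage (hinj.mono (subset_univ _))
  have hconn := (hT.countable.isConnected_compl_of_one_lt_rank hdim).isPreconnected
  have hce : Continuous e := OpenPartialHomeomorph.continuous_univBall x r
  have him := hconn.image e hce.continuousOn
  have hmem : ∀ w ∈ ball x r, φ w ≠ c →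
      w ∈ e '' (e ⁻¹' {w | w ∈ ball x r ∧ φ w = c})ᶜ := by
    intro w hw hwc
    have hw' : w ∈ e.target := by rw [htgt]; exact hw
    refine ⟨e.symm w, ?_, e.right_inv hw'⟩
    intro h
    have h2 : e (e.symm w) ∈ {w | w ∈ ball x r ∧ φ w = c} := h
    rw [e.right_inv hw'] at h2
    exact hwc h2.2
  have hsub : e '' (e ⁻¹' {w | w ∈ ball x r ∧ φ w = c})ᶜ ⊆ ball x r := by
    rintro _ ⟨w, -, rfl⟩
    rw [← htgt]; exact e.map_source (by rw [hsrc]; trivial)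
  obtain ⟨w, hw, hwc⟩ := him.intermediate_value (hmem a ha hac.ne) (hmem b hb hcb.ne')
    (hφ.mono hsub) ⟨hac.le, hcb.le⟩
  obtain ⟨v, hv, rfl⟩ := hw
  exact hv ⟨hsub ⟨v, hv, rfl⟩, hwc⟩

lemma level_exists (hdim : 1 < Module.rank ℝ W) {x : W} {r : ℝ} (hr : 0 < r) {φ : W → ℝ}
    (hφ : ContinuousOn φ (ball x r)) : ∃ c, {w | w ∈ ball x r ∧ φ w = c}.Infinite := by
  by_cases h : ∀ a ∈ ball x r, φ a = φ x
  · refine ⟨φ x, ?_⟩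
    have : {w | w ∈ ball x r ∧ φ w = φ x} = ball x r := by
      ext w; exact ⟨fun h => h.1, fun hw => ⟨hw, h w hw⟩⟩
    rw [this]
    have hnt : Nontrivial W := by
      rw [← rank_pos_iff_nontrivial (R := ℝ)]
      exact lt_trans zero_lt_one hdim
    have : (𝓝[≠] x).NeBot := Module.punctured_nhds_neBot ℝ W x
    exact infinite_of_mem_nhds x (ball_mem_nhds x hr)
  · push Not at h
    obtain ⟨a, ha, hne⟩ := h
    have hx : x ∈ ball x r := mem_ball_self hr
    rcases lt_or_gt_of_ne hne with h1 | h1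
    · obtain ⟨c, hc1, hc2⟩ := exists_between h1
      exact ⟨c, level_inf hdim hφ ha hx hc1 hc2⟩
    · obtain ⟨c, hc1, hc2⟩ := exists_between h1
      exact ⟨c, level_inf hdim hφ hx ha hc1 hc2⟩

lemma conf4 {φ : W → ℝ} {κ : ℝ} (hκ : 0 < κ) {Gen : W → W → W → Prop}
    (hGen : ∀ p q, p ≠ q → ∃ S : Set W, IsOpen S ∧ Dense S ∧ ∀ w ∈ S, Gen p q w)
    {O : Set W} (hO : IsOpen O) (hφ : ContinuousOn φ O) {c : ℝ}
    (hinf : {w | w ∈ O ∧ φ w = c}.Infinite) :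
    ∃ η > (0:ℝ), ∃ w1 ∈ O, ∃ w2 ∈ O, ∃ w3 ∈ O, ∃ w4 ∈ O,
      (|φ w1 - c| < κ * η / 2 ∧ |φ w2 - c| < κ * η / 2 ∧ |φ w3 - c| < κ * η / 2 ∧
        |φ w4 - c| < κ * η / 2) ∧
      (2 * η ≤ dist w1 w2 ∧ 2 * η ≤ dist w1 w3 ∧ 2 * η ≤ dist w1 w4 ∧ 2 * η ≤ dist w2 w3 ∧
        2 * η ≤ dist w2 w4 ∧ 2 * η ≤ dist w3 w4) ∧
      Gen w1 w2 w3 ∧ Gen w1 w2 w4 ∧ Gen w1 w3 w4 ∧ Gen w2 w3 w4 := by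
  let f := hinf.natEmbedding
  have hf : ∀ i j : ℕ, i ≠ j → 0 < dist (f i : W) (f j : W) := by
    intro i j hij
    exact dist_pos.2 fun h => hij (f.injective (Subtype.ext h))
  have key : ∃ η > (0:ℝ), 4 * η ≤ dist (f 0 : W) (f 1) ∧ 4 * η ≤ dist (f 0 : W) (f 2) ∧
      4 * η ≤ dist (f 0 : W) (f 3) ∧ 4 * η ≤ dist (f 1 : W) (f 2) ∧
      4 * η ≤ dist (f 1 : W) (f 3) ∧ 4 * η ≤ dist (f 2 : W) (f 3) := by
    have h01 := hf 0 1 (by norm_num)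
    have h02 := hf 0 2 (by norm_num)
    have h03 := hf 0 3 (by norm_num)
    have h12 := hf 1 2 (by norm_num)
    have h13 := hf 1 3 (by norm_num)
    have h23 := hf 2 3 (by norm_num)
    refine ⟨min (min (min (dist (f 0 : W) (f 1)) (dist (f 0 : W) (f 2)))
      (min (dist (f 0 : W) (f 3)) (dist (f 1 : W) (f 2))))
      (min (dist (f 1 : W) (f 3)) (dist (f 2 : W) (f 3))) / 4, by positivity, ?_⟩
    refine ⟨?_, ?_, ?_, ?_, ?_, ?_⟩ <;> rw [mul_div_cancel₀ _ (by norm_num)] <;> simp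
  obtain ⟨η, hη, d01, d02, d03, d12, d13, d23⟩ := key
  have hp : ∀ i : ℕ, (f i : W) ∈ O ∧ φ (f i) = c := fun i => (f i).2
  have hκη : 0 < κ * η / 2 := by positivity
  have hnb : ∀ i : ℕ, {w | w ∈ O ∧ |φ w - c| < κ * η / 2 ∧ dist w (f i) < η} ∈ 𝓝 (f i : W) := by
    intro i
    have h1 : O ∈ 𝓝 (f i : W) := hO.mem_nhds (hp i).1
    have h2 : ContinuousAt φ (f i) := hφ.continuousAt h1
    have h3 := Metric.tendsto_nhds.1 h2 _ hκη
    filter_upwards [h1, h3, ball_mem_nhds (f i : W) hη] with w a1 a2 a3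
    refine ⟨a1, ?_, a3⟩
    rw [(hp i).2, Real.dist_eq] at a2
    exact a2
  have hne01 : (f 0 : W) ≠ f 1 := dist_pos.1 (by linarith)
  obtain ⟨S12, o12, D12, g12⟩ := hGen _ _ hne01
  obtain ⟨w3, hw3, h3O, h3φ, h3d⟩ := D12.inter_nhds_nonempty (hnb 2)
  have d13' : 3 * η ≤ dist (f 0 : W) w3 := by
    have := dist_triangle_right (f 0 : W) (f 2) w3
    rw [dist_comm w3] at h3d
    linarith
  have d23' : 3 * η ≤ dist (f 1 : W) w3 := by
    have := dist_triangle_right (f 1 : W) (f 2) w3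
    rw [dist_comm w3] at h3d
    linarith
  obtain ⟨S13, o13, D13, g13⟩ := hGen (f 0 : W) w3 (dist_pos.1 (by linarith))
  obtain ⟨S23, o23, D23, g23⟩ := hGen (f 1 : W) w3 (dist_pos.1 (by linarith))
  have DD : Dense (S12 ∩ (S13 ∩ S23)) :=
    D12.inter_of_isOpen_left (D13.inter_of_isOpen_left D23 o13) o12
  obtain ⟨w4, ⟨h412, h413, h423⟩, h4O, h4φ, h4d⟩ := DD.inter_nhds_nonempty (hnb 3)
  have z : ∀ i : ℕ, |φ (f i) - c| < κ * η / 2 := fun i => by rw [(hp i).2]; simpa using hκη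
  refine ⟨η, hη, f 0, (hp 0).1, f 1, (hp 1).1, w3, h3O, w4, h4O, ⟨z 0, z 1, h3φ, h4φ⟩,
    ⟨by linarith, by linarith, ?_, by linarith, ?_, ?_⟩, g12 _ hw3, g12 _ h412, g13 _ h413,
    g23 _ h423⟩
  · have := dist_triangle_right (f 0 : W) (f 3) w4
    rw [dist_comm w4] at h4d
    linarith
  · have := dist_triangle_right (f 1 : W) (f 3) w4
    rw [dist_comm w4] at h4d
    linarith
  · have h1 := dist_triangle4 (f 2 : W) w3 w4 (f 3)
    rw [dist_comm w3] at h3d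
    linarith

lemma local_abs (hdim : 1 < Module.rank ℝ W) {ρ κ : ℝ} (hρ : 0 < ρ) (hκ : 0 < κ) {φ : W → ℝ}
    (hφ : ContinuousOn φ (ball 0 ρ)) {Cr : W → W → Prop}
    (hCr : ∀ w ∈ ball (0:W) ρ, ∀ w' ∈ ball (0:W) ρ, w ≠ w' → |φ w - φ w'| < κ * dist w w' →
      Cr w w') {Gen : W → W → W → Prop}
    (hGen : ∀ p q, p ≠ q → ∃ S : Set W, IsOpen S ∧ Dense S ∧ ∀ w ∈ S, Gen p q w)
    (GG : Set (Set W))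
    (hT : ∀ a ∈ ball (0:W) ρ, ∀ b ∈ ball (0:W) ρ, ∀ c ∈ ball (0:W) ρ, Cr a b → Cr a c → Cr b c →
      Gen a b c → ∃ G ∈ GG, a ∈ G ∧ b ∈ G ∧ c ∈ G)
    (hF : ∀ G ∈ GG, ∀ a ∈ ball (0:W) ρ, ∀ b ∈ ball (0:W) ρ, ∀ c ∈ ball (0:W) ρ,
      ∀ d ∈ ball (0:W) ρ, a ∈ G → b ∈ G → c ∈ G → Cr a b → Cr a c → Cr a d → Cr b c → Cr b d →
      Cr c d → Gen a b c → Gen a b d → Gen a c d → Gen b c d → d ∈ G)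
    (hU : ∀ G ∈ GG, ∀ G' ∈ GG, ∀ a ∈ ball (0:W) ρ, ∀ b ∈ ball (0:W) ρ, ∀ c ∈ ball (0:W) ρ,
      a ∈ G → b ∈ G → c ∈ G → a ∈ G' → b ∈ G' → c ∈ G' → Cr a b → Cr a c → Gen a b c → G = G')
    (hC : ∀ G ∈ GG, ∀ w ∈ ball (0:W) ρ, w ∈ closure (G ∩ ball 0 ρ) → w ∈ G) :
    (∃ G ∈ GG, ball 0 ρ ⊆ G) ∧ ∀ O : Set W, IsOpen O → O ⊆ ball 0 ρ → O.Nonempty →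
      ∃ a ∈ O, ∃ b ∈ O, ∃ c ∈ O, Cr a b ∧ Cr a c ∧ Gen a b c := by
  set X := ball (0:W) ρ with hX
  have hXo : IsOpen X := isOpen_ball
  have crit : ∀ {η c : ℝ} {a b : W}, 0 < η → a ∈ X → b ∈ X → |φ a - c| < κ * η / 2 →
      |φ b - c| < κ * η / 2 → η ≤ dist a b → Cr a b := by
    intro η c a b hη ha hb h1 h2 h3
    refine hCr a ha b hb (dist_pos.1 (by linarith)) ?_
    have h4 : κ * η ≤ κ * dist a b := mul_le_mul_of_nonneg_left h3 hκ.le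
    have h5 : |φ a - φ b| ≤ |φ a - c| + |φ b - c| := by
      rw [abs_sub_comm (φ b)]; exact abs_sub_le _ _ _
    linarith
  have small : ∀ O : Set W, IsOpen O → O ⊆ X → O.Nonempty →
      ∃ c, {w | w ∈ O ∧ φ w = c}.Infinite := by
    rintro O hO hOX ⟨x, hx⟩
    obtain ⟨r, hr, hrO⟩ := Metric.isOpen_iff.1 hO x hx
    obtain ⟨c, hc⟩ := level_exists hdim hr (hφ.mono (hrO.trans hOX))
    exact ⟨c, hc.mono fun w hw => ⟨hrO hw.1, hw.2⟩⟩
  have trip : ∀ O : Set W, IsOpen O → O ⊆ X → ∀ c, {w | w ∈ O ∧ φ w = c}.Infinite →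
      ∃ a ∈ O, ∃ b ∈ O, ∃ c ∈ O, Cr a b ∧ Cr a c ∧ Gen a b c := by
    intro O hO hOX c hc
    obtain ⟨η, hη, w1, m1, w2, m2, w3, m3, w4, m4, ⟨l1, l2, l3, l4⟩,
      ⟨d12, d13, d14, d23, d24, d34⟩, g123, -⟩ := conf4 hκ hGen hO (hφ.mono hOX) hc
    exact ⟨w1, m1, w2, m2, w3, m3, crit hη (hOX m1) (hOX m2) l1 l2 (by linarith),
      crit hη (hOX m1) (hOX m3) l1 l3 (by linarith), g123⟩
  refine ⟨?_, fun O hO hOX hne => ?_⟩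
  swap
  · obtain ⟨c, hc⟩ := small O hO hOX hne
    exact trip O hO hOX c hc
  set I : Set ℝ := {c | {w | w ∈ X ∧ φ w = c}.Infinite} with hI
  have hopen : ∀ (c ε : ℝ), IsOpen {w | w ∈ X ∧ |φ w - c| < ε} := by
    intro c ε
    have := hφ.isOpen_inter_preimage hXo (isOpen_ball (x := c) (ε := ε))
    exact this
  have A : ∀ c : ℝ, ∃ ε > (0:ℝ), ∃ G ∈ GG, c ∈ I → ∀ w ∈ X, |φ w - c| < ε → w ∈ G := by
    have A0 : ∀ c ∈ I, ∃ ε > (0:ℝ), ∃ G ∈ GG, ∀ w ∈ X, |φ w - c| < ε → w ∈ G := by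
      intro c hc
      obtain ⟨η, hη, w1, m1, w2, m2, w3, m3, w4, m4, ⟨l1, l2, l3, l4⟩,
        ⟨d12, d13, d14, d23, d24, d34⟩, g123, g124, g134, g234⟩ := conf4 hκ hGen hXo hφ hc
      have c12 := crit hη m1 m2 l1 l2 (by linarith)
      have c13 := crit hη m1 m3 l1 l3 (by linarith)
      have c14 := crit hη m1 m4 l1 l4 (by linarith)
      have c23 := crit hη m2 m3 l2 l3 (by linarith)
      have c24 := crit hη m2 m4 l2 l4 (by linarith)
      have c34 := crit hη m3 m4 l3 l4 (by linarith)
      obtain ⟨G, hG, G1, G2, G3⟩ := hT w1 m1 w2 m2 w3 m3 c12 c13 c23 g123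
      have G4 := hF G hG w1 m1 w2 m2 w3 m3 w4 m4 G1 G2 G3 c12 c13 c14 c23 c24 c34 g123 g124
        g134 g234
      refine ⟨κ * η / 2, by positivity, G, hG, fun w hw hwφ => hC G hG w hw ?_⟩
      obtain ⟨S12, o12, D12, s12⟩ := hGen w1 w2 (dist_pos.1 (by linarith))
      obtain ⟨S13, o13, D13, s13⟩ := hGen w1 w3 (dist_pos.1 (by linarith))
      obtain ⟨S14, o14, D14, s14⟩ := hGen w1 w4 (dist_pos.1 (by linarith))
      obtain ⟨S23, o23, D23, s23⟩ := hGen w2 w3 (dist_pos.1 (by linarith))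
      obtain ⟨S24, o24, D24, s24⟩ := hGen w2 w4 (dist_pos.1 (by linarith))
      obtain ⟨S34, o34, D34, s34⟩ := hGen w3 w4 (dist_pos.1 (by linarith))
      have DD : Dense (S12 ∩ (S13 ∩ (S14 ∩ (S23 ∩ (S24 ∩ S34))))) :=
        D12.inter_of_isOpen_left (D13.inter_of_isOpen_left (D14.inter_of_isOpen_left
          (D23.inter_of_isOpen_left (D24.inter_of_isOpen_left D34 o24) o23) o14) o13) o12
      rw [mem_closure_iff_nhds]
      intro V hV
      obtain ⟨v, ⟨v12, v13, v14, v23, v24, v34⟩, ⟨hvX, hvφ⟩, hvV⟩ := DD.inter_nhds_nonempty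
        (inter_mem ((hopen c (κ * η / 2)).mem_nhds ⟨hw, hwφ⟩) hV)
      refine ⟨v, hvV, ?_, hvX⟩
      have far : ∀ a b : W, 2 * η ≤ dist a b → dist a v < η → η ≤ dist b v := by
        intro a b h1 h2
        have := dist_triangle_right a b v
        linarith
      have C1 := fun h => crit (b := v) hη m1 hvX l1 hvφ h
      have C2 := fun h => crit (b := v) hη m2 hvX l2 hvφ h
      have C3 := fun h => crit (b := v) hη m3 hvX l3 hvφ h
      have C4 := fun h => crit (b := v) hη m4 hvX l4 hvφ h
      by_cases n1 : dist w1 v < η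
      · exact hF G hG w2 m2 w3 m3 w4 m4 v hvX G2 G3 G4 c23 c24 (C2 (far _ _ d12 n1)) c34
          (C3 (far _ _ d13 n1)) (C4 (far _ _ d14 n1)) g234 (s23 _ v23) (s24 _ v24) (s34 _ v34)
      push Not at n1
      by_cases n2 : dist w2 v < η
      · exact hF G hG w1 m1 w3 m3 w4 m4 v hvX G1 G3 G4 c13 c14 (C1 n1) c34
          (C3 (far _ _ d23 n2)) (C4 (far _ _ d24 n2)) g134 (s13 _ v13) (s14 _ v14) (s34 _ v34)
      push Not at n2
      by_cases n3 : dist w3 v < η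
      · exact hF G hG w1 m1 w2 m2 w4 m4 v hvX G1 G2 G4 c12 c14 (C1 n1) c24
          (C2 n2) (C4 (far _ _ d34 n3)) g124 (s12 _ v12) (s14 _ v14) (s24 _ v24)
      push Not at n3
      exact hF G hG w1 m1 w2 m2 w3 m3 v hvX G1 G2 G3 c12 c13 (C1 n1) c23
          (C2 n2) (C3 n3) g123 (s12 _ v12) (s13 _ v13) (s23 _ v23)
    intro c
    by_cases hc : c ∈ I
    · obtain ⟨ε, hε, G, hG, h⟩ := A0 c hc
      exact ⟨ε, hε, G, hG, fun _ => h⟩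
    · obtain ⟨c', hc'⟩ := small X hXo subset_rfl ⟨0, mem_ball_self hρ⟩
      obtain ⟨ε, hε, G, hG, h⟩ := A0 c' hc'
      exact ⟨1, one_pos, G, hG, fun h => absurd h hc⟩
  choose ε hε G hG hA using A
  have hIo : I.OrdConnected := by
    refine ⟨fun c1 h1 c2 h2 c hc => ?_⟩
    rcases hc.1.eq_or_lt with h | h
    · rw [← h]; exact h1
    rcases hc.2.eq_or_lt with h' | h'
    · rw [h']; exact h2
    obtain ⟨a, ha, hac⟩ := h1.nonempty
    obtain ⟨b, hb, hbc⟩ := h2.nonempty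
    exact level_inf hdim hφ ha hb (by rw [hac]; exact h) (by rw [hbc]; exact h')
  have hIp : IsPreconnected I := hIo.isPreconnected
  have hloc : ∀ c ∈ I, ∀ c' ∈ I, |c' - c| < ε c → G c = G c' := by
    intro c hc c' hc' hcc
    set O := {w | w ∈ X ∧ |φ w - c| < ε c} ∩ {w | w ∈ X ∧ |φ w - c'| < ε c'} with hO
    have hOo : IsOpen O := (hopen _ _).inter (hopen _ _)
    have hinf : {w | w ∈ O ∧ φ w = c'}.Infinite := by
      refine hc'.mono fun w hw => ⟨⟨⟨hw.1, ?_⟩, ⟨hw.1, ?_⟩⟩, hw.2⟩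
      · rw [hw.2]; exact hcc
      · rw [hw.2]; simpa using hε c'
    obtain ⟨a, ha, b, hb, d, hd, e1, e2, e3⟩ := trip O hOo (fun w hw => hw.1.1) c' hinf
    exact hU _ (hG c) _ (hG c') a ha.1.1 b hb.1.1 d hd.1.1 (hA c hc a ha.1.1 ha.1.2)
      (hA c hc b hb.1.1 hb.1.2) (hA c hc d hd.1.1 hd.1.2) (hA c' hc' a ha.2.1 ha.2.2)
      (hA c' hc' b hb.2.1 hb.2.2) (hA c' hc' d hd.2.1 hd.2.2) e1 e2 e3
  have hall : ∀ c ∈ I, ∀ c' ∈ I, G c = G c' := by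
    intro c hc c' hc'
    refine hIp.induction₂ (fun a b => G a = G b) ?_ ?_ ?_ hc hc'
    · intro x hx
      have : ∀ᶠ y in 𝓝[I] x, |y - x| < ε x := by
        refine mem_nhdsWithin_of_mem_nhds ?_
        have := ball_mem_nhds x (hε x)
        filter_upwards [this] with y hy
        exact hy
      filter_upwards [this, self_mem_nhdsWithin] with y hy hyI
      exact hloc x hx y hyI hy
    · intro x y z _ _ _ h1 h2; exact h1.trans h2
    · intro x y _ _ h; exact h.symm
  obtain ⟨c0, hc0⟩ := small X hXo subset_rfl ⟨0, mem_ball_self hρ⟩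
  refine ⟨G c0, hG c0, fun w hw => hC _ (hG c0) w hw ?_⟩
  rw [_root_.mem_closure_iff]
  intro O hO hwO
  obtain ⟨c, hc⟩ := small (O ∩ X) (hO.inter hXo) inter_subset_right ⟨w, hwO, hw⟩
  have hcI : c ∈ I := hc.mono fun v hv => ⟨hv.1.2, hv.2⟩
  obtain ⟨v, hv, hvc⟩ := hc.nonempty
  refine ⟨v, hv.1, ?_, hv.2⟩
  rw [hall c0 hc0 c hcI]
  exact hA c hcI v hv.2 (by rw [hvc]; simpa using hε c)

end P7

section P8
open Filter Topology
variable {E : Type*} [NormedAddCommGroup E] [InnerProductSpace ℝ E]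

lemma dual_pair {u v : E} (hu : u ≠ 0) (hv : v ∉ Submodule.span ℝ {u}) :
    ∃ f g : E, ⟪f, u⟫ = 1 ∧ ⟪f, v⟫ = 0 ∧ ⟪g, u⟫ = 0 ∧ ⟪g, v⟫ = 1 ∧
      f ∈ Submodule.span ℝ {u, v} ∧ g ∈ Submodule.span ℝ {u, v} := by
  have huu : ⟪u, u⟫ ≠ 0 := inner_self_ne_zero.2 hu
  set v' := v - (⟪v, u⟫ / ⟪u, u⟫) • u with hv'
  have h1 : ⟪v', u⟫ = 0 := by
    simp only [hv', inner_sub_left, inner_smul_left, conj_trivial, div_mul_cancel₀ _ huu, sub_self]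
  have hne : v' ≠ 0 := fun h => hv (by
    rw [hv', sub_eq_zero] at h
    rw [h]; exact Submodule.smul_mem _ _ (Submodule.mem_span_singleton_self u))
  have h2 : ⟪v', v⟫ = ⟪v', v'⟫ := by
    conv_rhs => rw [hv', inner_sub_right, inner_smul_right, ← hv', h1]
    simp
  have hvv : ⟪v', v'⟫ ≠ 0 := inner_self_ne_zero.2 hne
  have mu : u ∈ Submodule.span ℝ {u, v} := Submodule.subset_span (by simp)
  have mv : v ∈ Submodule.span ℝ {u, v} := Submodule.subset_span (by simp)
  set g := (1 / ⟪v', v'⟫) • v' with hg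
  have mg : g ∈ Submodule.span ℝ {u, v} := by
    exact Submodule.smul_mem _ _ (Submodule.sub_mem _ mv (Submodule.smul_mem _ _ mu))
  have g1 : ⟪g, u⟫ = 0 := by simp [hg, inner_smul_left, h1]
  have g2 : ⟪g, v⟫ = 1 := by
    rw [hg, inner_smul_left, h2, conj_trivial, one_div_mul_cancel hvv]
  refine ⟨(1 / ⟪u, u⟫) • u - (⟪u, v⟫ / ⟪u, u⟫) • g, g, ?_, ?_, g1, g2, ?_, mg⟩
  · rw [inner_sub_left, inner_smul_left, inner_smul_left, g1]
    simp only [conj_trivial]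
    field_simp; simp
  · rw [inner_sub_left, inner_smul_left, inner_smul_left, g2]
    simp only [conj_trivial]
    field_simp; simp
  · exact Submodule.sub_mem _ (Submodule.smul_mem _ _ mu) (Submodule.smul_mem _ _ mg)

lemma Ind3_chart {p a b w : E} (hp : p ≠ 0) (ha : ⟪p, a⟫ = 0) (hb : ⟪p, b⟫ = 0) (hw : ⟪p, w⟫ = 0)
    (hab : b - a ≠ 0) (h : w - a ∉ Submodule.span ℝ {b - a}) : Ind3 (p + a) (p + b) (p + w) := by
  obtain ⟨f, g, f1, f2, g1, g2, -, -⟩ := dual_pair hab h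
  have hpp : ⟪p, p⟫ ≠ 0 := inner_self_ne_zero.2 hp
  rw [inner_sub_right] at f1 f2 g1 g2
  obtain ⟨e2, x1, x2, x3⟩ : ∃ e, ⟪e, p + a⟫ = 0 ∧ ⟪e, p + b⟫ = 1 ∧ ⟪e, p + w⟫ = 0 := by
    refine ⟨f - (⟪f, p + a⟫ / ⟪p, p⟫) • p, ?_, ?_, ?_⟩ <;>
    · simp only [inner_sub_left, inner_smul_left, inner_add_right, ha, hb, hw, conj_trivial,
        div_mul_cancel₀ _ hpp]
      linarith
  obtain ⟨e3, y1, y2, y3⟩ : ∃ e, ⟪e, p + a⟫ = 0 ∧ ⟪e, p + b⟫ = 0 ∧ ⟪e, p + w⟫ = 1 := by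
    refine ⟨g - (⟪g, p + a⟫ / ⟪p, p⟫) • p, ?_, ?_, ?_⟩ <;>
    · simp only [inner_sub_left, inner_smul_left, inner_add_right, ha, hb, hw, conj_trivial,
        div_mul_cancel₀ _ hpp]
      linarith
  have key : ∀ v, ⟪p, v⟫ = 0 → ⟪(1 / ⟪p, p⟫) • p, p + v⟫ = 1 := by
    intro v hv
    rw [inner_smul_left, inner_add_right, hv, add_zero, conj_trivial, one_div_mul_cancel hpp]
  refine ⟨(1 / ⟪p, p⟫) • p - (e2 + e3), e2, e3, ⟨?_, ?_, ?_⟩, ⟨x1, x2, x3⟩, ⟨y1, y2, y3⟩⟩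
  · rw [inner_sub_left, key a ha, inner_add_left, x1, y1]; norm_num
  · rw [inner_sub_left, key b hb, inner_add_left, x2, y2]; norm_num
  · rw [inner_sub_left, key w hw, inner_add_left, x3, y3]; norm_num

lemma cross_chart {K : Set E} {D : E → ℝ} {p z w w' : E} {r : ℝ} (hp : p ≠ 0)
    (hr : ball z r ⊆ interior K) (hr0 : 0 < r) (ha : ⟪p, w⟫ = 0) (hb : ⟪p, w'⟫ = 0) (hne : w ≠ w')
    (hw : ‖w‖ < ‖p‖) (h1 : |⟪z, p + w⟫ - D (p + w)| < r * ‖p‖ / 4)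
    (h2 : |(⟪z, p + w⟫ - D (p + w)) - (⟪z, p + w'⟫ - D (p + w'))| < r / 4 * dist w w') :
    Cross K D (p + w) (p + w') := by
  set A := ⟪z, p + w⟫ - D (p + w) with hA
  set A' := ⟪z, p + w'⟫ - D (p + w') with hA'
  set e := w - w' with he
  have he0 : e ≠ 0 := sub_ne_zero.2 hne
  have hen : 0 < ‖e‖ := norm_pos_iff.2 he0
  have hpn : 0 < ‖p‖ := norm_pos_iff.2 hp
  rw [dist_eq_norm, ← he] at h2
  have hpe : ⟪p, e⟫ = 0 := by rw [he, inner_sub_right, ha, hb, sub_zero]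
  have hep : ⟪e, p⟫ = 0 := by rw [real_inner_comm, hpe]
  set α := (A - A') / ‖e‖ ^ 2 with hα
  have hαe : α * ‖e‖ ^ 2 = A - A' := by rw [hα]; field_simp
  set s := -(A - α * ⟪e, w⟫) / ‖p‖ ^ 2 with hs
  have hsp : s * ‖p‖ ^ 2 = -(A - α * ⟪e, w⟫) := by rw [hs]; field_simp
  have hee : ⟪e, w⟫ - ⟪e, w'⟫ = ‖e‖ ^ 2 := by
    rw [← inner_sub_right, ← he, real_inner_self_eq_norm_sq]
  have hin : ∀ v, ⟪p, v⟫ = 0 → ⟪s • p - α • e, p + v⟫ = s * ‖p‖ ^ 2 - α * ⟪e, v⟫ := by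
    intro v hv
    simp only [inner_sub_left, inner_smul_left, inner_add_right, hv, hep, conj_trivial,
      real_inner_self_eq_norm_sq]
    ring
  refine ⟨z + (s • p - α • e), hr ?_, ?_, ?_⟩
  · rw [mem_ball, dist_eq_norm, add_sub_cancel_left]
    have n1 : ‖s • p - α • e‖ ≤ |s| * ‖p‖ + |α| * ‖e‖ := by
      refine (norm_sub_le _ _).trans ?_
      rw [norm_smul, norm_smul, Real.norm_eq_abs, Real.norm_eq_abs]
    have n2 : |α| * ‖e‖ < r / 4 := by
      have : |α| * ‖e‖ * ‖e‖ = |A - A'| := by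
        rw [← hαe, abs_mul, abs_of_pos (by positivity : 0 < ‖e‖ ^ 2)]; ring
      exact lt_of_mul_lt_mul_right (by rw [this]; exact h2) hen.le
    have n3 : |s| * ‖p‖ < r / 2 := by
      have e1 : |s| * ‖p‖ * ‖p‖ = |A - α * ⟪e, w⟫| := by
        rw [← abs_neg (A - α * ⟪e, w⟫), ← hsp, abs_mul, abs_of_pos (by positivity : 0 < ‖p‖ ^ 2)]
        ring
      have e2 : |A - α * ⟪e, w⟫| ≤ |A| + |α| * |⟪e, w⟫| := by
        rw [← abs_mul]; exact abs_sub _ _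
      have e3 := abs_real_inner_le_norm e w
      have e4 : |α| * |⟪e, w⟫| ≤ |α| * ‖e‖ * ‖w‖ := by
        rw [mul_assoc]; exact mul_le_mul_of_nonneg_left e3 (abs_nonneg _)
      have e5 : |α| * ‖e‖ * ‖w‖ ≤ r / 4 * ‖p‖ :=
        mul_le_mul n2.le hw.le (norm_nonneg _) (by positivity)
      refine lt_of_mul_lt_mul_right (?_ : _ * ‖p‖ < r / 2 * ‖p‖) hpn.le
      rw [e1]; linarith
    linarith
  · rw [inner_add_left, hin w ha, hsp]; linarith
  · rw [inner_add_left, hin w' hb, hsp]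
    have : α * ⟪e, w⟫ - α * ⟪e, w'⟫ = A - A' := by rw [← hαe, ← hee]; ring
    linarith

lemma GQ_smul {K : Set E} {D : E → ℝ} (hD : ∀ y, ∀ t > (0:ℝ), D (t • y) = t * D y) {Q : E → ℝ}
    {y : E} {t : ℝ} (ht : 0 < t) (h : t • y ∈ GQ K D Q) : y ∈ GQ K D Q := by
  intro x hx hxy
  exact h x hx (by rw [inner_smul_right, hD y t ht, hxy])

lemma gen_dense {W : Type*} [NormedAddCommGroup W] [NormedSpace ℝ W]
    (hdim : 1 < Module.rank ℝ W) (a u : W) :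
    IsOpen {w : W | w - a ∉ Submodule.span ℝ {u}} ∧ Dense {w : W | w - a ∉ Submodule.span ℝ {u}} := by
  have hcl : IsClosed (Submodule.span ℝ {u} : Set W) := Submodule.closed_of_finiteDimensional _
  have hne : Submodule.span ℝ {u} ≠ ⊤ := fun h => by
    have h1 : Module.rank ℝ (Submodule.span ℝ {u}) ≤ 1 := by
      refine (rank_span_le _).trans ?_
      simp
    rw [h, rank_top] at h1
    exact absurd hdim (not_lt.2 h1)
  have hd : Dense (Submodule.span ℝ {u} : Set W)ᶜ := by
    rw [← interior_eq_empty_iff_dense_compl]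
    by_contra hh
    exact hne (Submodule.eq_top_of_nonempty_interior' _ (nonempty_iff_ne_empty.2 hh))
  constructor
  · exact hcl.isOpen_compl.preimage (continuous_id.sub continuous_const)
  · exact hd.preimage (Homeomorph.subRight a).isOpenMap

lemma local_geo [FiniteDimensional ℝ E] (hdim : 3 ≤ Module.finrank ℝ E) {K : Set E}
    (hK : Convex ℝ K) (hcl : IsClosed K) {D : E → ℝ} (hDc : ∀ y ≠ 0, ContinuousAt D y)
    (hDh : ∀ y, ∀ t > (0:ℝ), D (t • y) = t * D y)
    (hmeet : ∀ y ≠ 0, ∃ z ∈ interior K, ⟪z, y⟫ = D y) {Ω : Set E} (hΩ : IsOpen Ω)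
    (hgood : ∀ y ∈ Ω, Good K D y) {p : E} (hp : p ∈ Ω) (hp0 : p ≠ 0) :
    (∃ Q, IsQuad Q ∧ (∃ x, Q x ≠ 0) ∧ GQ K D Q ∈ 𝓝 p) ∧
    ∃ a ∈ Ω, ∃ b ∈ Ω, ∃ c ∈ Ω, Cross K D a b ∧ Cross K D a c ∧ Ind3 a b c := by
  have hpn : 0 < ‖p‖ := norm_pos_iff.2 hp0
  set W := (ℝ ∙ p)ᗮ with hW
  have hdimW : 1 < Module.rank ℝ W := by
    apply Module.lt_rank_of_lt_finrank
    have h1 := Submodule.finrank_add_finrank_orthogonal (ℝ ∙ p)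
    rw [finrank_span_singleton hp0] at h1
    have h2 : Module.finrank ℝ W = Module.finrank ℝ (ℝ ∙ p)ᗮ := rfl
    omega
  have hWp : ∀ w : W, ⟪p, (w : E)⟫ = 0 := fun w => Submodule.mem_orthogonal_singleton_iff_inner_right.1 w.2
  have hne0 : ∀ w : W, p + (w : E) ≠ 0 := fun w h => by
    have : ⟪p, p + (w : E)⟫ = ‖p‖ ^ 2 := by rw [inner_add_right, hWp, real_inner_self_eq_norm_sq, add_zero]
    rw [h, inner_zero_right] at this
    exact absurd this (by positivity)
  obtain ⟨z, hz, hzp⟩ := hmeet p hp0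
  obtain ⟨r, hr0, hr⟩ := Metric.isOpen_iff.1 isOpen_interior z hz
  set φ : W → ℝ := fun w => ⟪z, p + (w : E)⟫ - D (p + w) with hφ
  have hφc : Continuous φ := by
    rw [continuous_iff_continuousAt]
    intro w
    have h1 : ContinuousAt (fun w : W => p + (w : E)) w := by fun_prop
    have h2 : ContinuousAt (fun w : W => D (p + (w : E))) w :=
      ContinuousAt.comp (f := fun w : W => p + (w : E)) (hDc _ (hne0 w)) h1
    exact (ContinuousAt.inner (𝕜 := ℝ) continuousAt_const h1).sub h2
  have hφ0 : φ 0 = 0 := by simp [hφ, hzp]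
  obtain ⟨ρ, hρ, hρs⟩ : ∃ ρ > (0:ℝ), ∀ w ∈ ball (0:W) ρ, p + (w : E) ∈ Ω ∧ ‖(w : E)‖ < ‖p‖ ∧
      |φ w| < r * ‖p‖ / 4 := by
    have e1 : ∀ᶠ w : W in 𝓝 0, p + (w : E) ∈ Ω := by
      have hc : Continuous (fun w : W => p + (w : E)) := by fun_prop
      refine hc.continuousAt.eventually_mem (hΩ.mem_nhds ?_)
      simpa using hp
    have e2 : ∀ᶠ w : W in 𝓝 0, ‖(w : E)‖ < ‖p‖ := by
      have hc : Continuous (fun w : W => ‖(w : E)‖) := by fun_prop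
      exact hc.continuousAt.eventually_lt continuousAt_const (by simpa using hpn)
    have e3 : ∀ᶠ w : W in 𝓝 0, |φ w| < r * ‖p‖ / 4 := by
      refine hφc.abs.continuousAt.eventually_lt continuousAt_const ?_
      rw [hφ0]; simp; positivity
    obtain ⟨ρ, hρ, h⟩ := Metric.eventually_nhds_iff_ball.1 (e1.and (e2.and e3))
    exact ⟨ρ, hρ, h⟩
  have main := local_abs (W := W) hdimW hρ (by positivity : 0 < r / 4) hφc.continuousOn
    (Cr := fun w w' => Cross K D (p + (w : E)) (p + (w' : E))) ?_
    (Gen := fun a b w => Ind3 (p + (a : E)) (p + (b : E)) (p + (w : E))) ?_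
    {G | ∃ Q, IsQuad Q ∧ (∃ x, Q x ≠ 0) ∧ G = {w : W | p + (w : E) ∈ GQ K D Q}} ?_ ?_ ?_ ?_
  · obtain ⟨⟨G, ⟨Q, hQ, hn, rfl⟩, hG⟩, htr⟩ := main
    constructor
    · refine ⟨Q, hQ, hn, ?_⟩
      have hpp : ⟪p, p⟫ ≠ 0 := inner_self_ne_zero.2 hp0
      have c0 : ContinuousAt (fun y : E => ⟪p, y⟫) p := by fun_prop
      have c1 : ContinuousAt (fun y : E => (⟪p, p⟫ / ⟪p, y⟫) • y - p) p :=
        ((continuousAt_const.div c0 hpp).smul continuousAt_id).sub continuousAt_const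
      have e1 : ∀ᶠ y in 𝓝 p, ‖(⟪p, p⟫ / ⟪p, y⟫) • y - p‖ < ρ := by
        refine c1.norm.eventually_lt continuousAt_const ?_
        rw [div_self hpp]; simpa using hρ
      have e2 : ∀ᶠ y in 𝓝 p, 0 < ⟪p, y⟫ :=
        continuousAt_const.eventually_lt c0 (real_inner_self_pos.2 hp0)
      filter_upwards [e1, e2] with y h1 h2
      have ht : 0 < ⟪p, p⟫ / ⟪p, y⟫ := div_pos (real_inner_self_pos.2 hp0) h2
      refine GQ_smul hDh ht ?_
      have hmem : (⟪p, p⟫ / ⟪p, y⟫) • y - p ∈ W := by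
        rw [hW, Submodule.mem_orthogonal_singleton_iff_inner_right, inner_sub_right,
          inner_smul_right, div_mul_cancel₀ _ h2.ne', sub_self]
      have := hG (show (⟨_, hmem⟩ : W) ∈ ball 0 ρ by
        rw [mem_ball_zero_iff]; exact h1)
      have h3 : p + ((⟪p, p⟫ / ⟪p, y⟫) • y - p) ∈ GQ K D Q := this
      rwa [add_sub_cancel] at h3
    · obtain ⟨a, ha, b, hb, c, hc, h1, h2, h3⟩ := htr _ isOpen_ball subset_rfl
        ⟨0, mem_ball_self hρ⟩
      exact ⟨_, (hρs a ha).1, _, (hρs b hb).1, _, (hρs c hc).1, h1, h2, h3⟩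
  · intro w hw w' hw' hne h
    exact cross_chart hp0 hr hr0 (hWp w) (hWp w') (fun h => hne (Subtype.ext h)) (hρs w hw).2.1
      (hρs w hw).2.2 h
  · intro a b hab
    refine ⟨{w | w - a ∉ Submodule.span ℝ {b - a}}, (gen_dense hdimW a (b - a)).1,
      (gen_dense hdimW a (b - a)).2, fun w hw => ?_⟩
    refine Ind3_chart hp0 (hWp a) (hWp b) (hWp w) ?_ ?_
    · exact sub_ne_zero.2 fun h => hab (Subtype.ext h).symm
    · intro h
      apply hw
      rw [Submodule.mem_span_singleton] at h ⊢
      obtain ⟨t, ht⟩ := h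
      exact ⟨t, Subtype.ext (by simpa using ht)⟩
  · intro a ha b hb c hc h1 h2 h3 h4
    obtain ⟨Q, hQ, hn, q1, q2, q3⟩ := Triple hK hcl (hgood _ (hρs a ha).1) (hgood _ (hρs b hb).1)
      (hgood _ (hρs c hc).1) h1 h2 h3 h4
    exact ⟨_, ⟨Q, hQ, hn, rfl⟩, q1, q2, q3⟩
  · rintro G ⟨Q, hQ, hn, rfl⟩ a ha b hb c hc d hd q1 q2 q3 c12 c13 c14 c23 c24 c34 i1 i2 i3 i4
    exact Four hK hcl (hgood _ (hρs a ha).1).1 (hgood _ (hρs b hb).1).1 (hgood _ (hρs c hc).1).1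
      (hgood _ (hρs d hd).1) c12 c13 c14 c23 c24 c34 i1 i2 i3 i4 hQ hn q1 q2 q3
  · rintro G ⟨Q, hQ, hn, rfl⟩ G' ⟨Q', hQ', hn', rfl⟩ a ha b hb c hc q1 q2 q3 q1' q2' q3' c12 c13 i1
    obtain ⟨k, hk, hkQ⟩ := Uniq hcl (hgood _ (hρs a ha).1).1 (hgood _ (hρs b hb).1).1
      (hgood _ (hρs c hc).1).1 hQ hQ' hn hn' q1 q2 q3 q1' q2' q3' c12 c13 i1
    rw [GQ_congr hk hkQ]
  · rintro G ⟨Q, hQ, hn, rfl⟩ w hw hwc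
    obtain ⟨z', hz', hzw⟩ := hmeet _ (hne0 w)
    refine GQ_closed hK hcl (hne0 w) (hDc _ (hne0 w)) hz' hzw hQ ?_
    have hc : Continuous (fun w : W => p + (w : E)) := by fun_prop
    have := map_mem_closure (f := fun w : W => p + (w : E)) (t := GQ K D Q) hc hwc fun v hv => hv.1
    exact this

end P8

section P9
open Filter Topology
variable {E : Type*} [NormedAddCommGroup E] [InnerProductSpace ℝ E]

lemma patch [FiniteDimensional ℝ E] (hdim : 3 ≤ Module.finrank ℝ E) {K : Set E}
    (hK : Convex ℝ K) (hcl : IsClosed K) {D : E → ℝ} (hDc : ∀ y ≠ 0, ContinuousAt D y)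
    (hDh : ∀ y, ∀ t > (0:ℝ), D (t • y) = t * D y)
    (hmeet : ∀ y ≠ 0, ∃ z ∈ interior K, ⟪z, y⟫ = D y) {Ω : Set E} (hΩ : IsOpen Ω)
    (hgood : ∀ y ∈ Ω, Good K D y) (hΩ0 : ∀ y ∈ Ω, y ≠ 0) (hpre : IsPreconnected Ω)
    (hne : Ω.Nonempty) :
    ∃ Q, IsQuad Q ∧ (∃ x, Q x ≠ 0) ∧ Ω ⊆ GQ K D Q := by
  have h1 : ∀ p : E, ∃ Q : E → ℝ, p ∈ Ω → IsQuad Q ∧ (∃ x, Q x ≠ 0) ∧ GQ K D Q ∈ 𝓝 p := by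
    intro p
    by_cases hp : p ∈ Ω
    · obtain ⟨Q, hQ⟩ := (local_geo hdim hK hcl hDc hDh hmeet hΩ hgood hp (hΩ0 p hp)).1
      exact ⟨Q, fun _ => hQ⟩
    · exact ⟨0, fun h => absurd h hp⟩
  choose Q hQ using h1
  have hloc : ∀ p ∈ Ω, ∀ q ∈ Ω, q ∈ interior (GQ K D (Q p)) → GQ K D (Q p) = GQ K D (Q q) := by
    intro p hp q hq hqi
    obtain ⟨p1, p2, p3⟩ := hQ p hp
    obtain ⟨q1, q2, q3⟩ := hQ q hq
    set O := interior (GQ K D (Q p)) ∩ interior (GQ K D (Q q)) ∩ Ω with hO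
    have hOo : IsOpen O := (isOpen_interior.inter isOpen_interior).inter hΩ
    have hqO : q ∈ O := ⟨⟨hqi, mem_interior_iff_mem_nhds.2 q3⟩, hq⟩
    obtain ⟨a, ha, b, hb, c, hc, c12, c13, hI⟩ := (local_geo hdim hK hcl hDc hDh hmeet hOo
      (fun y hy => hgood y hy.2) hqO (hΩ0 q hq)).2
    obtain ⟨k, hk, hkQ⟩ := Uniq hcl (hgood a ha.2).1 (hgood b hb.2).1 (hgood c hc.2).1 p1 q1 p2 q2
      (interior_subset ha.1.1) (interior_subset hb.1.1) (interior_subset hc.1.1)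
      (interior_subset ha.1.2) (interior_subset hb.1.2) (interior_subset hc.1.2) c12 c13 hI
    exact (GQ_congr hk hkQ).symm
  obtain ⟨p0, hp0⟩ := hne
  obtain ⟨a1, a2, a3⟩ := hQ p0 hp0
  refine ⟨Q p0, a1, a2, fun y hy => ?_⟩
  have : GQ K D (Q p0) = GQ K D (Q y) := by
    refine hpre.induction₂ (fun a b => GQ K D (Q a) = GQ K D (Q b)) ?_ ?_ ?_ hp0 hy
    · intro x hx
      have : interior (GQ K D (Q x)) ∈ 𝓝[Ω] x :=
        mem_nhdsWithin_of_mem_nhds (interior_mem_nhds.2 (hQ x hx).2.2)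
      filter_upwards [this, self_mem_nhdsWithin] with y hy hyI
      exact hloc x hx y hyI hy
    · intro x y z _ _ _ h1 h2; exact h1.trans h2
    · intro x y _ _ h; exact h.symm
  rw [this]
  exact mem_of_mem_nhds (hQ y hy).2.2

/-- Recession directions. -/
def Rec (K : Set E) (v : E) : Prop := ∀ x ∈ K, ∀ t : ℝ, 0 ≤ t → x + t • v ∈ K

lemma Rec.smul {K : Set E} {v : E} (h : Rec K v) {a : ℝ} (ha : 0 ≤ a) : Rec K (a • v) := by
  intro x hx t ht
  rw [smul_smul]
  exact h x hx _ (mul_nonneg ht ha)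

lemma Rec.add {K : Set E} {v w : E} (h : Rec K v) (h' : Rec K w) : Rec K (v + w) := by
  intro x hx t ht
  rw [smul_add, ← add_assoc]
  exact h' _ (h x hx t ht) t ht

lemma Rec.interior {K : Set E} {v : E} (h : Rec K v) : Rec (interior K) v := by
  intro x hx t ht
  rw [mem_interior] at hx ⊢
  obtain ⟨U, hU, hUo, hxU⟩ := hx
  refine ⟨(fun y => y + t • v) '' U, ?_, ?_, ⟨x, hxU, rfl⟩⟩
  · rintro _ ⟨y, hy, rfl⟩
    exact h y (hU hy) t ht
  · exact (Homeomorph.addRight (t • v)).isOpenMap U hUo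

lemma exists_rec [FiniteDimensional ℝ E] {K : Set E} (hK : Convex ℝ K) (hcl : IsClosed K) {y : E}
    (hy : y ∉ Om K) : ∃ v ≠ 0, Rec K v ∧ 0 ≤ ⟪v, y⟫ := by
  have h1 : ∀ n : ℕ, ∃ x ∈ K, (n : ℝ) - 1 / ((n : ℝ) + 1) * ‖x‖ < ⟪x, y⟫ := by
    intro n
    by_contra hcon
    push Not at hcon
    exact hy ⟨1 / ((n : ℝ) + 1), by positivity, n, hcon⟩
  choose x hxK hx using h1
  have hn1 : ∀ n : ℕ, (1:ℝ) / ((n : ℝ) + 1) ≤ 1 := fun n => by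
    rw [div_le_one (by positivity)]
    linarith [(Nat.cast_nonneg n : (0:ℝ) ≤ n)]
  have hbig : ∀ n : ℕ, (n : ℝ) < ‖x n‖ * (‖y‖ + 1) := by
    intro n
    have a1 := real_inner_le_norm (x n) y
    have a2 := mul_le_mul_of_nonneg_right (hn1 n) (norm_nonneg (x n))
    linarith [hx n]
  have htop : Tendsto (fun n => ‖x n‖) atTop atTop := by
    have hy1 : 0 < ‖y‖ + 1 := by positivity
    have : Tendsto (fun n : ℕ => (n : ℝ) / (‖y‖ + 1)) atTop atTop :=
      tendsto_natCast_atTop_atTop.atTop_div_const hy1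
    refine tendsto_atTop_mono (fun n => ?_) this
    rw [div_le_iff₀ hy1]
    exact (hbig n).le
  have hsph : ∀ n, ‖x (n + 1)‖⁻¹ • x (n + 1) ∈ sphere (0:E) 1 := by
    intro n
    have hpos : 0 < ‖x (n + 1)‖ := by
      have h := hbig (n + 1)
      have h2 : (0:ℝ) ≤ ((n + 1 : ℕ) : ℝ) := Nat.cast_nonneg _
      by_contra hc
      have h0 : ‖x (n + 1)‖ = 0 := le_antisymm (not_lt.1 hc) (norm_nonneg _)
      rw [h0, zero_mul] at h
      linarith
    rw [mem_sphere_zero_iff_norm, norm_smul, norm_inv, norm_norm, inv_mul_cancel₀ hpos.ne']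
  obtain ⟨v, hv, f, hf, hlim⟩ := (isCompact_sphere (0:E) 1).tendsto_subseq hsph
  have hv0 : v ≠ 0 := fun h => by
    rw [h, mem_sphere_zero_iff_norm, norm_zero] at hv
    exact zero_ne_one hv
  have hfs : Tendsto (fun n => f n + 1) atTop atTop := (tendsto_add_atTop_nat 1).comp hf.tendsto_atTop
  have htop' : Tendsto (fun n => ‖x (f n + 1)‖) atTop atTop := htop.comp hfs
  have hinv : Tendsto (fun n => ‖x (f n + 1)‖⁻¹) atTop (𝓝 0) := htop'.inv_tendsto_atTop
  refine ⟨v, hv0, ?_, ?_⟩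
  · intro p hp t ht
    have lim : Tendsto (fun n => p + (t * ‖x (f n + 1)‖⁻¹) • (x (f n + 1) - p)) atTop
        (𝓝 (p + t • v)) := by
      have e : ∀ n, p + (t * ‖x (f n + 1)‖⁻¹) • (x (f n + 1) - p) =
          p + (t • (‖x (f n + 1)‖⁻¹ • x (f n + 1)) - (t * ‖x (f n + 1)‖⁻¹) • p) := by
        intro n
        rw [smul_sub, smul_smul]
      simp only [e]
      have l1 : Tendsto (fun n => t • (‖x (f n + 1)‖⁻¹ • x (f n + 1))) atTop (𝓝 (t • v)) :=
        hlim.const_smul t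
      have l2 : Tendsto (fun n => (t * ‖x (f n + 1)‖⁻¹) • p) atTop (𝓝 ((t * 0) • p)) :=
        (hinv.const_mul t).smul_const p
      have := (l1.sub l2).const_add p
      simpa using this
    refine hcl.mem_of_tendsto lim ?_
    filter_upwards [htop'.eventually_ge_atTop t, htop'.eventually_gt_atTop 0] with n h1 h2
    refine hK.add_smul_sub_mem hp (hxK _) ⟨by positivity, ?_⟩
    rw [← div_eq_mul_inv, div_le_one h2]
    exact h1
  · have l1 : Tendsto (fun n => ⟪‖x (f n + 1)‖⁻¹ • x (f n + 1), y⟫) atTop (𝓝 ⟪v, y⟫) :=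
      (hlim.inner tendsto_const_nhds)
    have l2 : Tendsto (fun n => -(1 / (((f n + 1 : ℕ) : ℝ) + 1))) atTop (𝓝 (-0)) :=
      ((tendsto_one_div_add_atTop_nhds_zero_nat (𝕜 := ℝ)).comp hfs).neg
    rw [neg_zero] at l2
    refine le_of_tendsto_of_tendsto l2 l1 ?_
    filter_upwards [htop'.eventually_gt_atTop 0] with n h2
    have h := hx (f n + 1)
    rw [inner_smul_left, conj_trivial]
    have h3 : (0:ℝ) ≤ ((f n + 1 : ℕ) : ℝ) := Nat.cast_nonneg _
    rw [← div_eq_inv_mul, le_div_iff₀ h2]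
    linarith

lemma Rec_neg {K : Set E} {v y : E} (hne : K.Nonempty) (hv : v ≠ 0) (h : Rec K v) (hy : y ∈ Om K) :
    ⟪v, y⟫ < 0 := by
  by_contra hc
  obtain ⟨x, hx⟩ := hne
  obtain ⟨T, hT, hTK⟩ := Om_ray hy x hv (not_lt.1 hc)
  exact hTK (h x hx T hT.le)

lemma exists_perp2 [FiniteDimensional ℝ E] (hdim : 3 ≤ Module.finrank ℝ E) (u y : E) :
    ∃ d ≠ 0, ⟪d, u⟫ = 0 ∧ ⟪d, y⟫ = 0 := by
  have h1 := Submodule.finrank_add_finrank_orthogonal (Submodule.span ℝ ({u, y} : Set E))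
  have h2 : Module.finrank ℝ (Submodule.span ℝ ({u, y} : Set E)) ≤ 2 := by
    classical
    have := finrank_span_finset_le_card (R := ℝ) ({u, y} : Finset E)
    have h3 := Finset.card_le_two (a := u) (b := y)
    simp only [Finset.coe_insert, Finset.coe_singleton] at this
    exact this.trans h3
  have h3 : (Submodule.span ℝ ({u, y} : Set E))ᗮ ≠ ⊥ := fun h => by
    rw [h, finrank_bot] at h1
    omega
  obtain ⟨d, hd, hd0⟩ := Submodule.exists_mem_ne_zero_of_ne_bot h3
  rw [Submodule.mem_orthogonal'] at hd
  exact ⟨d, hd0, hd u (Submodule.subset_span (by simp)), hd y (Submodule.subset_span (by simp))⟩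

lemma normal_strict [CompleteSpace E] {K : Set E} (hK : Convex ℝ K) (hcl : IsClosed K)
    (hIn : (interior K).Nonempty)
    {p : E} (hp : p ∈ frontier K) : ∃ N ≠ 0, ∀ x ∈ interior K, ⟪x, N⟫ < ⟪p, N⟫ := by
  obtain ⟨N, hN⟩ := exists_normal hK hcl hp
  have hlt : ∀ x ∈ interior K, ⟪x, N⟫ < ⟪p, N⟫ := fun x hx => by
    have := hN x hx
    rw [inner_sub_right, real_inner_comm, real_inner_comm p] at this
    linarith
  refine ⟨N, fun h => ?_, hlt⟩
  obtain ⟨x, hx⟩ := hIn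
  have := hlt x hx
  rw [h, inner_zero_right, inner_zero_right] at this
  exact lt_irrefl _ this

lemma far [CompleteSpace E] {K : Set E} (hK : Convex ℝ K) (hcl : IsClosed K)
    (hIn : (interior K).Nonempty)
    {D : E → ℝ} (hDc : ∀ y ≠ 0, ContinuousAt D y)
    (hmeet : ∀ y ≠ 0, ∃ z ∈ interior K, ⟪z, y⟫ = D y) (hO0 : (0:E) ∉ Om K) {y0 : E}
    (hy0 : y0 ∈ Om K) {σ : ℝ} (hσ : σ * σ = 1) {p : E} (hp : p ∈ frontier K)
    (hlow : ⟪p, y0⟫ < σ * D (σ • y0)) : ∃ y ∈ Om K, ⟪p, σ • y⟫ = D (σ • y) := by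
  have hσ0 : σ ≠ 0 := fun h => by simp [h] at hσ
  obtain ⟨N, hN0, hN⟩ := normal_strict hK hcl hIn hp
  obtain ⟨x, hx, hxN⟩ := hmeet (σ • N) (smul_ne_zero hσ0 hN0)
  have hNb : ∀ x ∈ K, ⟪x, N⟫ ≤ ⟪p, N⟫ := by
    intro x hx
    have h1 : x ∈ closure (interior K) := by rw [closure_int hK hcl hIn]; exact hx
    have hclo : IsClosed {x : E | ⟪x, N⟫ ≤ ⟪p, N⟫} := isClosed_le (by fun_prop) continuous_const
    exact closure_minimal (fun x hx => (hN x hx).le) hclo h1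
  set Y : ℝ → E := fun s => (1 - s) • N + s • y0 with hY
  have hYO : ∀ s ∈ Ioc (0:ℝ) 1, Y s ∈ Om K := by
    intro s hs
    rw [hY]
    have h1 : ∀ x ∈ K, ⟪x, (1 - s) • N⟫ ≤ (1 - s) * ⟪p, N⟫ := fun x hx => by
      rw [inner_smul_right]
      exact mul_le_mul_of_nonneg_left (hNb x hx) (by linarith [hs.2])
    have := Om_add (Om_smul hy0 hs.1) h1
    rwa [add_comm] at this
  have hY0 : ∀ s ∈ Icc (0:ℝ) 1, Y s ≠ 0 := by
    intro s hs
    rcases hs.1.eq_or_lt with h | h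
    · simp [hY, ← h, hN0]
    · exact fun h0 => hO0 (h0 ▸ hYO s ⟨h, hs.2⟩)
  have hYc : Continuous Y := by rw [hY]; fun_prop
  have hc : ContinuousOn (fun s => σ * (⟪p, σ • Y s⟫ - D (σ • Y s))) (Icc 0 1) := by
    intro s hs
    refine ContinuousAt.continuousWithinAt ?_
    have c1 : ContinuousAt (fun s => σ • Y s) s := (hYc.const_smul σ).continuousAt
    have c2 : ContinuousAt (fun s => D (σ • Y s)) s :=
      ContinuousAt.comp (f := fun s => σ • Y s) (hDc _ (smul_ne_zero hσ0 (hY0 s hs))) c1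
    exact continuousAt_const.mul ((ContinuousAt.inner (𝕜 := ℝ) continuousAt_const c1).sub c2)
  have v0 : 0 < σ * (⟪p, σ • Y 0⟫ - D (σ • Y 0)) := by
    have e : Y 0 = N := by simp [hY]
    rw [e, ← hxN, inner_smul_right, inner_smul_right, ← mul_sub, ← mul_assoc, hσ]
    linarith [hN x hx]
  have v1 : σ * (⟪p, σ • Y 1⟫ - D (σ • Y 1)) < 0 := by
    have e : Y 1 = y0 := by simp [hY]
    rw [e, inner_smul_right, mul_sub, ← mul_assoc, hσ]
    linarith
  obtain ⟨s, hs, hs0⟩ := intermediate_value_Icc' (zero_le_one) hc ⟨v1.le, v0.le⟩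
  have hs0' : σ * (⟪p, σ • Y s⟫ - D (σ • Y s)) = 0 := hs0
  have hsp : 0 < s := by
    rcases hs.1.eq_or_lt with h | h
    · rw [← h] at hs0'; linarith
    · exact h
  refine ⟨Y s, hYO s ⟨hsp, hs.2⟩, ?_⟩
  have := (mul_eq_zero.1 hs0').resolve_left hσ0
  linarith

end P9

section P10
open Filter Topology
variable {E : Type*} [NormedAddCommGroup E] [InnerProductSpace ℝ E]

lemma UF_far {K : Set E} (hcl : IsClosed K) {y0 z d0 : E} (hy0 : y0 ∈ Om K)
    (hz : z ∈ interior K) (hd0 : d0 ≠ 0) (hd : ⟪d0, y0⟫ = 0) {m : ℝ} (hzm : ⟪z, y0⟫ < m - 1)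
    {g : E → ℝ} (hg : IsQuad g) (hgz : g z = 0)
    (h : ∀ p ∈ frontier K, ⟪p, y0⟫ < m → g p = 0) (x : E) : g x = 0 := by
  have := lemma_UF hcl hy0 hz hd0 hd (x - z) hg hgz (fun a b hp hab => h _ hp (by
    rw [inner_add_left]
    linarith [le_abs_self ⟪a • d0 + b • (x - z), y0⟫]))
  rwa [add_sub_cancel] at this

lemma low_point {K : Set E} {y0 z v : E} (hz : z ∈ interior K) (hv : Rec K v) (hvy : ⟪v, y0⟫ < 0)
    (m : ℝ) : ∃ t ≥ (0:ℝ), z + t • v ∈ interior K ∧ ⟪z + t • v, y0⟫ < m := by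
  set t := (|⟪z, y0⟫ - m| + 1) / (-⟪v, y0⟫) with ht
  have hpos : 0 < -⟪v, y0⟫ := by linarith
  have ht0 : 0 ≤ t := by positivity
  refine ⟨t, ht0, hv.interior z hz t ht0, ?_⟩
  rw [inner_add_left, inner_smul_left, conj_trivial]
  have : t * (-⟪v, y0⟫) = |⟪z, y0⟫ - m| + 1 := by
    rw [ht, div_mul_cancel₀ _ hpos.ne']
  linarith [le_abs_self (⟪z, y0⟫ - m)]

lemma one_lt_rank_of [FiniteDimensional ℝ E] (hdim : 3 ≤ Module.finrank ℝ E) :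
    1 < Module.rank ℝ E := Module.lt_rank_of_lt_finrank (by omega)

lemma global_GQ [FiniteDimensional ℝ E] (hdim : 3 ≤ Module.finrank ℝ E) {K : Set E}
    (hK : Convex ℝ K) (hcl : IsClosed K) (hIn : (interior K).Nonempty) {D : E → ℝ}
    (hDc : ∀ y ≠ 0, ContinuousAt D y)
    (hDh : ∀ y, ∀ t > (0:ℝ), D (t • y) = t * D y)
    (hmeet : ∀ y ≠ 0, ∃ z ∈ interior K, ⟪z, y⟫ = D y)
    (hVQ : ∀ y ≠ 0, ∃ q, VQ K D y q) {y0 : E} (hy0 : y0 ∈ Om K) :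
    ∃ Q, IsQuad Q ∧ (∃ x, Q x ≠ 0) ∧ ∀ y ≠ 0, y ∈ GQ K D Q := by
  by_cases hO0 : (0:E) ∈ Om K
  · have hall : ∀ y : E, y ∈ Om K := by
      intro y
      have hc : Continuous (fun t : ℝ => t • y) := by fun_prop
      have h0 : (0:ℝ) • y ∈ Om K := by rwa [zero_smul]
      have h1 : ∀ᶠ t : ℝ in 𝓝 0, t • y ∈ Om K :=
        hc.continuousAt.eventually_mem ((Om_isOpen K).mem_nhds h0)
      have h2 : ∀ᶠ t : ℝ in 𝓝[>] 0, t • y ∈ Om K := mem_nhdsWithin_of_mem_nhds h1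
      obtain ⟨t, ht, htp⟩ := (h2.and self_mem_nhdsWithin).exists
      have htp' : (0:ℝ) < t := htp
      have := Om_smul ht (inv_pos.2 htp')
      rwa [smul_smul, inv_mul_cancel₀ htp'.ne', one_smul] at this
    have hnt : Nontrivial E := Module.nontrivial_of_finrank_pos (R := ℝ) (by omega)
    obtain ⟨Q, hQ, hn, hs⟩ := patch hdim hK hcl hDc hDh hmeet (Ω := {0}ᶜ) isOpen_compl_singleton
      (fun y hy => ⟨BL_of_Om (hall y), hVQ y hy⟩) (fun y hy => hy)
      (isConnected_compl_singleton_of_one_lt_rank (one_lt_rank_of hdim) 0).isPreconnected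
      (isConnected_compl_singleton_of_one_lt_rank (one_lt_rank_of hdim) 0).nonempty
    exact ⟨Q, hQ, hn, fun y hy => hs hy⟩
  have hOne : ∀ y ∈ Om K, y ≠ 0 := fun y hy h => hO0 (h ▸ hy)
  obtain ⟨Q, hQ, hn, hs⟩ := patch hdim hK hcl hDc hDh hmeet (Om_isOpen K)
      (fun y hy => ⟨BL_of_Om hy, hVQ y (hOne y hy)⟩) hOne (Om_convex K).isPreconnected ⟨y0, hy0⟩
  obtain ⟨Q', hQ', hn', hs'⟩ := patch hdim hK hcl hDc hDh hmeet (Ω := -Om K) (Om_isOpen K).neg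
      (fun y hy => ⟨BL_of_neg_Om hy, hVQ y (fun h => hOne _ hy (by rw [h, neg_zero]))⟩)
      (fun y hy h => hOne _ hy (by rw [h, neg_zero])) (Om_convex K).neg.isPreconnected
      ⟨-y0, by simpa using hy0⟩
  obtain ⟨z0, hz0⟩ := hIn
  have hKne : K.Nonempty := ⟨z0, interior_subset hz0⟩
  set m := min (D y0) (-D (-y0)) with hm
  have far1 : ∀ p ∈ frontier K, ⟪p, y0⟫ < m → Q p = 0 := by
    intro p hp hpm
    obtain ⟨y, hy, hpy⟩ := far hK hcl ⟨z0, hz0⟩ hDc hmeet hO0 hy0 (σ := 1) (by norm_num) hp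
      (by rw [one_smul, one_mul]; exact lt_of_lt_of_le hpm (min_le_left _ _))
    rw [one_smul] at hpy
    exact hs hy p hp hpy
  have far2 : ∀ p ∈ frontier K, ⟪p, y0⟫ < m → Q' p = 0 := by
    intro p hp hpm
    obtain ⟨y, hy, hpy⟩ := far hK hcl ⟨z0, hz0⟩ hDc hmeet hO0 hy0 (σ := -1) (by norm_num) hp
      (by rw [neg_one_smul, neg_one_mul]; exact lt_of_lt_of_le hpm (min_le_right _ _))
    rw [neg_one_smul] at hpy
    exact hs' (by simpa using hy) p hp hpy
  obtain ⟨d1, hd1, -, hd1y⟩ := exists_perp2 hdim y0 y0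
  have hnz : ∀ z ∈ interior K, ⟪z, y0⟫ < m - 1 → Q z ≠ 0 := by
    intro z hz hzm h0
    obtain ⟨x, hx⟩ := hn
    exact hx (UF_far hcl hy0 hz hd1 hd1y hzm hQ h0 far1 x)
  have hneg : -Om K ⊆ GQ K D Q := by
    obtain ⟨v, hv0, hv, -⟩ := exists_rec hK hcl hO0
    obtain ⟨t, -, hzi, hzm⟩ := low_point hz0 hv (Rec_neg hKne hv0 hv hy0) (m - 1)
    set z := z0 + t • v
    have hQz := hnz z hzi hzm
    have hg : IsQuad (fun x => Q' x - (Q' z / Q z) * Q x) := hQ'.sub (hQ.smul _)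
    have hg0 := UF_far hcl hy0 hzi hd1 hd1y hzm hg (by simp [hQz])
      (fun p hp hpm => by simp [far1 p hp hpm, far2 p hp hpm])
    have heq : ∀ x, Q' x = (Q' z / Q z) * Q x := fun x => sub_eq_zero.1 (hg0 x)
    have hc : Q' z / Q z ≠ 0 := fun h => by
      obtain ⟨x, hx⟩ := hn'
      exact hx (by rw [heq x, h, zero_mul])
    rw [← GQ_congr hc heq]
    exact hs'
  refine ⟨Q, hQ, hn, fun u hu => ?_⟩
  by_cases hu1 : u ∈ Om K
  · exact hs hu1
  by_cases hu2 : -u ∈ Om K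
  · exact hneg hu2
  obtain ⟨w, hw, hwu, hwy⟩ : ∃ w, Rec K w ∧ ⟪w, u⟫ = 0 ∧ ⟪w, y0⟫ < 0 := by
    obtain ⟨v, hv0, hv, hvu⟩ := exists_rec hK hcl hu1
    obtain ⟨v', hv0', hv', hvu'⟩ := exists_rec hK hcl hu2
    rw [inner_neg_right] at hvu'
    have n1 := Rec_neg hKne hv0 hv hy0
    have n2 := Rec_neg hKne hv0' hv' hy0
    rcases hvu.eq_or_lt with h | h
    · exact ⟨v, hv, h.symm, n1⟩
    · refine ⟨(-⟪v', u⟫) • v + ⟪v, u⟫ • v', (hv.smul hvu').add (hv'.smul hvu), ?_, ?_⟩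
      · rw [inner_add_left, inner_smul_left, inner_smul_left]
        simp only [conj_trivial]; ring
      · rw [inner_add_left, inner_smul_left, inner_smul_left]
        simp only [conj_trivial]
        nlinarith
  obtain ⟨z1, hz1, hz1u⟩ := hmeet u hu
  obtain ⟨t, -, hzi, hzm⟩ := low_point hz1 hw hwy (m - 1)
  set z := z1 + t • w with hz
  have hzu : ⟪z, u⟫ = D u := by
    rw [hz, inner_add_left, inner_smul_left, hwu, mul_zero, add_zero, hz1u]
  clear_value z
  obtain ⟨q, hq, hq0, hqp⟩ := hVQ u hu
  have hqz := hqp z hzi hzu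
  have hQz := hnz z hzi hzm
  obtain ⟨d, hd, hdu, hdy⟩ := exists_perp2 hdim u y0
  have hg : IsQuad (fun x => q x - (q z / Q z) * Q x) := hq.sub (hQ.smul _)
  intro x hx hxu
  have hxz : ⟪x - z, u⟫ = 0 := by rw [inner_sub_left, hxu, hzu, sub_self]
  have := lemma_UF hcl hy0 hzi hd hdy (x - z) hg (by simp [hQz]) (fun a b hp hab => by
    have h1 : Q (z + (a • d + b • (x - z))) = 0 := far1 _ hp (by
      rw [inner_add_left]
      linarith [le_abs_self ⟪a • d + b • (x - z), y0⟫])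
    have h2 : q (z + (a • d + b • (x - z))) = 0 := hq0 _ hp (by
      rw [inner_add_left, hzu, inner_add_left, inner_smul_left, inner_smul_left, hdu, hxz]; simp)
    simp [h1, h2])
  simp only [add_sub_cancel] at this
  rw [hq0 x hx hxu, zero_sub, neg_eq_zero] at this
  exact (mul_eq_zero.1 this).resolve_left (div_ne_zero hqz.ne' hQz)

lemma global_Q [FiniteDimensional ℝ E] (hdim : 3 ≤ Module.finrank ℝ E) {K : Set E}
    (hK : Convex ℝ K) (hcl : IsClosed K) (hIn : (interior K).Nonempty) {D : E → ℝ}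
    (hDc : ∀ y ≠ 0, ContinuousAt D y)
    (hDh : ∀ y, ∀ t > (0:ℝ), D (t • y) = t * D y)
    (hmeet : ∀ y ≠ 0, ∃ z ∈ interior K, ⟪z, y⟫ = D y)
    (hVQ : ∀ y ≠ 0, ∃ q, VQ K D y q) {y0 : E} (hy0 : y0 ∈ Om K) :
    ∃ Q, IsQuad Q ∧ (∀ x ∈ frontier K, Q x = 0) ∧ ∀ x ∈ interior K, Q x ≠ 0 := by
  obtain ⟨Q, hQ, hn, h⟩ := global_GQ hdim hK hcl hIn hDc hDh hmeet hVQ hy0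
  have hfr : ∀ x ∈ frontier K, Q x = 0 := by
    intro p hp
    obtain ⟨N, hN0, hN⟩ := normal_strict hK hcl hIn hp
    have hc : ContinuousOn (fun y => ⟪p, y⟫ - D y) ({0}ᶜ : Set E) := fun y hy =>
      ((ContinuousAt.inner (𝕜 := ℝ) continuousAt_const continuousAt_id).sub
        (hDc y hy)).continuousWithinAt
    obtain ⟨x, hx, hxN⟩ := hmeet N hN0
    obtain ⟨x', hx', hxN'⟩ := hmeet (-N) (neg_ne_zero.2 hN0)
    have v1 : ⟪p, -N⟫ - D (-N) ≤ 0 := by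
      rw [← hxN', inner_neg_right, inner_neg_right]
      linarith [hN x' hx']
    have v2 : 0 ≤ ⟪p, N⟫ - D N := by
      rw [← hxN]; linarith [hN x hx]
    obtain ⟨y, hy, hy2⟩ :=
      (isConnected_compl_singleton_of_one_lt_rank (one_lt_rank_of hdim)
        (0:E)).isPreconnected.intermediate_value (a := -N) (b := N) (neg_ne_zero.2 hN0) hN0 hc
        ⟨v1, v2⟩
    have hy3 : ⟪p, y⟫ - D y = 0 := hy2
    exact h y hy p hp (by linarith)
  refine ⟨Q, hQ, hfr, fun z hz h0 => ?_⟩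
  obtain ⟨d, hd, hdy, -⟩ := exists_perp2 hdim y0 y0
  obtain ⟨x, hx⟩ := hn
  have := lemma_UF hcl hy0 hz hd hdy (x - z) hQ h0 (fun a b hp _ => hfr _ hp)
  rw [add_sub_cancel] at this
  exact hx this

end P10

section P11
open Filter Topology

lemma isQuad_sum {E : Type*} [NormedAddCommGroup E] [InnerProductSpace ℝ E] {ι : Type*}
    (s : Finset ι) (f : ι → E → ℝ) (hf : ∀ i, IsQuad (f i)) : IsQuad (fun x => ∑ i ∈ s, f i x) := by
  classical
  induction s using Finset.induction_on with
  | empty => simpa using isQuad_const (E := E) 0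
  | insert a s ha ih =>
    refine ((hf a).add ih).congr fun x => ?_
    rw [Finset.sum_insert ha]

/-- Coordinate functional. -/
def coordL {n : ℕ} (i : Fin n) : En n →ₗ[ℝ] ℝ where
  toFun x := x i
  map_add' _ _ := rfl
  map_smul' _ _ := rfl

lemma isQuad_poly {n : ℕ} (a : Matrix (Fin n) (Fin n) ℝ) (b : Fin n → ℝ) (c : ℝ) :
    IsQuad (fun x : En n => (∑ i, ∑ k, a i k * x i * x k) + 2 * (∑ i, b i * x i) + c) := by
  refine ((isQuad_sum _ _ fun i => isQuad_sum _ _ fun k => ?_).add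
    ((isQuad_sum _ _ fun i => ?_).smul 2)).add (isQuad_const c)
  · exact ((isQuad_lin_mul (coordL i) (coordL k) 0 0).smul (a i k)).congr fun x => by
      show a i k * x i * x k = a i k * ((x i + 0) * (x k + 0))
      ring
  · exact ((isQuad_lin_mul (coordL i) 0 0 1).smul (b i)).congr fun x => by
      show b i * x i = b i * ((x i + 0) * (0 + 1))
      ring

lemma lin_expand {n : ℕ} {F : Type*} [AddCommGroup F] [Module ℝ F] (l : En n →ₗ[ℝ] F) (x : En n) :
    l x = ∑ i, x i • l (EuclideanSpace.single i 1) := by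
  conv_lhs => rw [← (EuclideanSpace.basisFun (Fin n) ℝ).sum_repr x]
  simp [map_sum]

lemma real_quadric {n : ℕ} {f : En n → ℝ} (hf : IsQuad f) (hz : ∃ x, f x = 0)
    (hn : ∃ x, f x ≠ 0) : IsRealQuadricSurface {x : En n | f x = 0} := by
  refine ⟨?_, hz⟩
  obtain ⟨B, l, c, h⟩ := hf
  set E1 : Fin n → En n := fun i => EuclideanSpace.single i 1 with hE1
  have hl : ∀ x : En n, l x = ∑ i, l (E1 i) * x i := fun x => by
    rw [lin_expand l x]
    exact Finset.sum_congr rfl fun i _ => by rw [smul_eq_mul, mul_comm]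
  have hB : ∀ x : En n, B x x = ∑ i, ∑ k, B (E1 i) (E1 k) * x i * x k := fun x => by
    rw [lin_expand B x, LinearMap.sum_apply]
    refine Finset.sum_congr rfl fun i _ => ?_
    rw [LinearMap.smul_apply, lin_expand _ x, smul_eq_mul, Finset.mul_sum]
    refine Finset.sum_congr rfl fun k _ => ?_
    rw [smul_eq_mul]; ring
  set a : Matrix (Fin n) (Fin n) ℝ := fun i k => (B (E1 i) (E1 k) + B (E1 k) (E1 i)) / 2 with ha
  have hBa : ∀ x : En n, B x x = ∑ i, ∑ k, a i k * x i * x k := fun x => by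
    have h1 := hB x
    have h2 : B x x = ∑ i, ∑ k, B (E1 k) (E1 i) * x i * x k := by
      rw [h1, Finset.sum_comm]
      refine Finset.sum_congr rfl fun i _ => Finset.sum_congr rfl fun k _ => ?_
      ring
    have h3 : ∑ i, ∑ k, a i k * x i * x k = (B x x + B x x) / 2 := by
      conv_rhs => rw [h2]
      conv_rhs => lhs; lhs; rw [← h2, h1]
      rw [← Finset.sum_add_distrib, Finset.sum_div]
      refine Finset.sum_congr rfl fun i _ => ?_
      rw [← Finset.sum_add_distrib, Finset.sum_div]
      refine Finset.sum_congr rfl fun k _ => ?_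
      simp only [ha]; ring
    rw [h3]; ring
  by_cases ha0 : a = 0
  · have hf' : ∀ x, f x = l x + c := fun x => by rw [h, hBa, ha0]; simp
    refine ⟨fun i k => l (E1 i) * l (E1 k), fun i => c * l (E1 i), c ^ 2, ?_, ?_, ?_⟩
    · exact Matrix.IsSymm.ext fun i k => mul_comm (l (E1 k)) (l (E1 i))
    · intro h0
      have hi : ∀ i, l (E1 i) = 0 := fun i => by
        have := congrFun (congrFun h0 i) i
        simpa using this
      have hl0 : ∀ x, l x = 0 := fun x => by rw [hl x]; simp [hi]
      obtain ⟨x, hx⟩ := hz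
      obtain ⟨y, hy⟩ := hn
      rw [hf', hl0] at hx hy
      exact hy hx
    · ext x
      have : (∑ i, ∑ k, l (E1 i) * l (E1 k) * x i * x k) + 2 * (∑ i, c * l (E1 i) * x i) + c ^ 2 =
          (f x) ^ 2 := by
        have e1 : (∑ i, ∑ k, l (E1 i) * l (E1 k) * x i * x k) = l x * l x := by
          rw [hl x, Finset.sum_mul_sum]
          refine Finset.sum_congr rfl fun i _ => Finset.sum_congr rfl fun k _ => ?_
          ring
        have e2 : (∑ i, c * l (E1 i) * x i) = c * l x := by
          rw [hl x, Finset.mul_sum]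
          exact Finset.sum_congr rfl fun i _ => by ring
        rw [e1, e2, hf']; ring
      simp only [mem_setOf_eq]
      rw [this, sq_eq_zero_iff]
  · refine ⟨a, fun i => l (E1 i) / 2, c, ?_, ha0, ?_⟩
    · refine Matrix.IsSymm.ext fun i k => ?_
      show (B (E1 k) (E1 i) + B (E1 i) (E1 k)) / 2 = (B (E1 i) (E1 k) + B (E1 k) (E1 i)) / 2
      ring
    · ext x
      have : 2 * (∑ i, l (E1 i) / 2 * x i) = l x := by
        rw [hl x, Finset.mul_sum]
        exact Finset.sum_congr rfl fun i _ => by ring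
      simp only [mem_setOf_eq]
      rw [this, ← hBa, ← h]

lemma comp_of {X : Type*} [TopologicalSpace X] {U F : Set X} (hU : IsOpen U)
    (hp : IsPreconnected U) (hne : U.Nonempty) (hUF : U ⊆ F) (h : closure U ∩ F ⊆ U) :
    U ∈ componentsIn F := by
  obtain ⟨x, hx⟩ := hne
  refine ⟨x, hUF hx, ?_⟩
  refine Subset.antisymm (hp.subset_connectedComponentIn hx hUF) ?_
  refine isPreconnected_connectedComponentIn.subset_of_closure_inter_subset hU
    ⟨x, mem_connectedComponentIn (hUF hx), hx⟩ ?_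
  exact fun y hy => h ⟨hy.1, connectedComponentIn_subset _ _ hy.2⟩

lemma convex_quadric_of {n : ℕ} {U : Set (En n)} {f : En n → ℝ} (hf : IsQuad f) (hU : IsOpen U)
    (hconv : Convex ℝ U) (hne : U.Nonempty) (h1 : ∀ x ∈ U, f x ≠ 0)
    (h2 : ∀ x ∈ frontier U, f x = 0) (hz : ∃ x, f x = 0) : IsConvexQuadric (frontier U) := by
  obtain ⟨x0, hx0⟩ := hne
  refine ⟨{x | f x = 0}, U, real_quadric hf hz ⟨x0, h1 x0 hx0⟩, ?_, hconv, rfl⟩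
  refine comp_of hU hconv.isPreconnected ⟨x0, hx0⟩ (fun x hx => h1 x hx) ?_
  rintro x ⟨hx, hxF⟩
  by_contra hxU
  refine hxF (h2 x ?_)
  rw [hU.frontier_eq]
  exact ⟨hx, hxU⟩

lemma comp_frontier {X : Type*} [TopologicalSpace X] {U F : Set X} (hU : U ∈ componentsIn F) :
    closure U ∩ F ⊆ U := by
  obtain ⟨x, hx, rfl⟩ := hU
  rintro y ⟨hy, hyF⟩
  have hp : IsPreconnected (insert y (connectedComponentIn F x)) :=
    isPreconnected_connectedComponentIn.subset_closure (subset_insert _ _)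
      (insert_subset hy subset_closure)
  exact hp.subset_connectedComponentIn (mem_insert_of_mem _ (mem_connectedComponentIn hx))
    (insert_subset hyF (connectedComponentIn_subset _ _)) (mem_insert _ _)

lemma decode {m : ℕ} {S : Set (En m)} (h : IsConvexQuadric S) :
    ∃ (q : En m → ℝ) (U : Set (En m)), IsQuad q ∧ IsOpen U ∧ Convex ℝ U ∧ U.Nonempty ∧
      (∀ x ∈ U, q x ≠ 0) ∧ (∀ x ∈ frontier U, q x = 0) ∧ (∃ x, q x = 0) ∧ S = frontier U := by
  obtain ⟨Q, U, ⟨⟨a, b, c, -, -, rfl⟩, hne⟩, hU, hconv, hS⟩ := h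
  have hq := isQuad_poly a b c
  have hcl : IsClosed {x : En m | (∑ i, ∑ k, a i k * x i * x k) + 2 * (∑ i, b i * x i) + c = 0} :=
    isClosed_eq hq.continuous continuous_const
  have hfr := comp_frontier hU
  obtain ⟨x0, hx0, hUx⟩ := hU
  have hUo : IsOpen U := by rw [hUx]; exact hcl.isOpen_compl.connectedComponentIn
  refine ⟨_, U, hq, hUo, hconv, ?_, ?_, ?_, hne, hS⟩
  · exact ⟨x0, by rw [hUx]; exact mem_connectedComponentIn hx0⟩
  · intro x hx
    rw [hUx] at hx
    exact connectedComponentIn_subset _ _ hx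
  · intro x hx
    by_contra hne
    rw [hUo.frontier_eq] at hx
    exact hx.2 (hfr ⟨hx.1, hne⟩)

end P11

section P12
open Filter Topology

lemma psi_exists {n m : ℕ} (φ : En m →ᵃⁱ[ℝ] En n) :
    ∃ (L : En n →ₗ[ℝ] En m) (e : En m), (∀ y, e + L (φ y) = y) ∧
      ∀ x d, ⟪φ d - φ 0, x - φ (e + L x)⟫ = 0 := by
  set A := φ.linearIsometry with hA
  have hφ : ∀ y, φ y = A y + φ 0 := fun y => by
    have := φ.map_vadd 0 y
    simpa using this
  set L := ContinuousLinearMap.adjoint A.toContinuousLinearMap with hL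
  have hLi : ∀ d w, ⟪d, L w⟫ = ⟪A d, w⟫ := fun d w =>
    ContinuousLinearMap.adjoint_inner_right A.toContinuousLinearMap d w
  have hLA : ∀ y, L (A y) = y := fun y => by
    refine ext_inner_left ℝ fun d => ?_
    rw [hLi, A.inner_map_map]
  refine ⟨L.toLinearMap, -L (φ 0), fun y => ?_, fun x d => ?_⟩
  · show -L (φ 0) + L (φ y) = y
    rw [hφ y, map_add, hLA]
    abel
  · show ⟪φ d - φ 0, x - φ (-L (φ 0) + L x)⟫ = 0
    have e1 : -L (φ 0) + L x = L (x - φ 0) := by rw [map_sub]; abel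
    rw [e1, hφ d, hφ (L (x - φ 0))]
    have e2 : x - (A (L (x - φ 0)) + φ 0) = (x - φ 0) - A (L (x - φ 0)) := by abel
    rw [e2, add_sub_cancel_right, inner_sub_right, A.inner_map_map, hLi, sub_self]

/-- Projection onto a hyperplane, in coordinates. -/
lemma psi_hyp {n m : ℕ} {φ : En m →ᵃⁱ[ℝ] En n} {u : En n} (hu : ‖u‖ = 1) {s : ℝ}
    (hr : range (φ : En m → En n) = {x | ⟪x, u⟫ = s}) :
    ∃ (L : En n →ₗ[ℝ] En m) (e : En m), (∀ y, e + L (φ y) = y) ∧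
      ∀ x, ∃ t : ℝ, x = φ (e + L x) + t • u := by
  obtain ⟨L, e, h1, h2⟩ := psi_exists φ
  refine ⟨L, e, h1, fun x => ?_⟩
  set w := x - φ (e + L x) with hw
  have huu : ⟪u, u⟫ = 1 := by rw [real_inner_self_eq_norm_sq, hu]; norm_num
  have h0 : ⟪φ 0, u⟫ = s := by
    have : φ 0 ∈ range (φ : En m → En n) := mem_range_self _
    rw [hr] at this; exact this
  have hp : ⟪w - ⟪w, u⟫ • u, u⟫ = 0 := by
    rw [inner_sub_left, inner_smul_left, huu, conj_trivial]; ring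
  have hm : φ 0 + (w - ⟪w, u⟫ • u) ∈ range (φ : En m → En n) := by
    rw [hr]
    show ⟪φ 0 + (w - ⟪w, u⟫ • u), u⟫ = s
    rw [inner_add_left, hp, h0, add_zero]
  obtain ⟨d, hd⟩ := hm
  have h3 := h2 x d
  rw [hd, add_sub_cancel_left, ← hw] at h3
  have h4 : ⟪w - ⟪w, u⟫ • u, w - ⟪w, u⟫ • u⟫ = 0 := by
    rw [inner_sub_right, h3, inner_smul_right, hp]; simp
  have h5 := inner_self_eq_zero.1 h4
  refine ⟨⟪w, u⟫, ?_⟩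
  rw [sub_eq_zero] at h5
  rw [← h5, hw]; abel

/-- Data for a section. -/
lemma sec_data {n : ℕ} {K : Set (En n)} {u : En n} {s : ℝ} (hu : ‖u‖ = 1)
    (h : IsConvexQuadricIn {x : En n | ⟪x, u⟫ = s} (frontier K ∩ {x : En n | ⟪x, u⟫ = s})) :
    ∃ (φ : En (n - 1) →ᵃⁱ[ℝ] En n) (L : En n →ₗ[ℝ] En (n - 1)) (e : En (n - 1))
      (q : En (n - 1) → ℝ) (U : Set (En (n - 1))),
      (∀ y, e + L (φ y) = y) ∧ (∀ x, ∃ t : ℝ, x = φ (e + L x) + t • u) ∧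
      (∀ y, ⟪φ y, u⟫ = s) ∧ (∀ x, ⟪x, u⟫ = s → ∃ y, φ y = x) ∧
      IsQuad q ∧ IsOpen U ∧ Convex ℝ U ∧ U.Nonempty ∧
      (∀ x ∈ U, q x ≠ 0) ∧ (∀ x ∈ frontier U, q x = 0) ∧ (∃ x, q x = 0) ∧
      (∀ y, φ y ∈ frontier K ↔ y ∈ frontier U) := by
  obtain ⟨-, φ, hr, hq⟩ := h
  obtain ⟨L, e, h1, h2⟩ := psi_hyp hu hr
  obtain ⟨q, U, a1, a2, a3, a4, a5, a6, a7, a8⟩ := decode hq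
  have hy : ∀ y, ⟪φ y, u⟫ = s := fun y => by
    have : φ y ∈ range (φ : En (n-1) → En n) := mem_range_self _
    rw [hr] at this; exact this
  refine ⟨φ, L, e, q, U, h1, h2, hy, ?_, a1, a2, a3, a4, a5, a6, a7, ?_⟩
  · intro x hx
    have : x ∈ range (φ : En (n-1) → En n) := by rw [hr]; exact hx
    exact this
  · intro y
    rw [← a8]
    exact ⟨fun h => ⟨h, hy y⟩, fun h => h.1⟩

/-- Either `Om K` is nonempty or `K` is a cylinder. -/
lemma dichotomy {E : Type*} [NormedAddCommGroup E] [InnerProductSpace ℝ E] [FiniteDimensional ℝ E]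
    {K : Set E} (hK : Convex ℝ K) (hcl : IsClosed K) (hne : K.Nonempty) :
    (∃ y, y ∈ Om K) ∨ ∃ v ≠ (0 : E), ∀ x ∈ K, ∀ t : ℝ, x + t • v ∈ K := by
  set A : Set E := {y | ∃ C, ∀ x ∈ K, ⟪x, y⟫ ≤ C} with hA
  by_cases hs : Submodule.span ℝ A = ⊤
  · left
    set b := Module.Basis.ofSpan hs.ge with hb
    have hbA : range b ⊆ A := Module.Basis.ofSpan_subset hs.ge
    have : Fintype _ := FiniteDimensional.fintypeBasisIndex b
    refine ⟨∑ i, b i, ?_⟩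
    by_contra hy
    obtain ⟨v, hv, hr, hv0⟩ := exists_rec hK hcl hy
    have hle : ∀ i, ⟪v, b i⟫ ≤ 0 := fun i => by
      obtain ⟨C, hC⟩ := hbA (mem_range_self i)
      obtain ⟨x, hx⟩ := hne
      by_contra hpos
      push Not at hpos
      have hT : 0 ≤ (|C - ⟪x, b i⟫| + 1) / ⟪v, b i⟫ := by positivity
      have := hC _ (hr x hx _ hT)
      rw [inner_add_left, inner_smul_left, conj_trivial, div_mul_cancel₀ _ hpos.ne'] at this
      linarith [le_abs_self (C - ⟪x, b i⟫)]
    have hz : ∀ i, ⟪v, b i⟫ = 0 := by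
      rw [inner_sum] at hv0
      have h0 : ∑ i, ⟪v, b i⟫ = 0 := le_antisymm (Finset.sum_nonpos fun i _ => hle i) hv0
      intro i
      exact (Finset.sum_eq_zero_iff_of_nonpos fun i _ => hle i).1 h0 i (Finset.mem_univ i)
    apply hv
    have h0 : (innerₛₗ ℝ v : E →ₗ[ℝ] ℝ) = 0 := b.ext fun i => by
      rw [LinearMap.zero_apply]; exact hz i
    have h1 : ⟪v, v⟫ = 0 := by
      have := congrArg (fun l : E →ₗ[ℝ] ℝ => l v) h0
      exact this
    exact inner_self_eq_zero.1 h1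
  · right
    have hne' : (Submodule.span ℝ A)ᗮ ≠ ⊥ := fun h => hs ((Submodule.orthogonal_eq_bot_iff).1 h)
    obtain ⟨v, hvm, hv⟩ := Submodule.exists_mem_ne_zero_of_ne_bot hne'
    refine ⟨v, hv, fun x hx t => ?_⟩
    by_contra hnot
    obtain ⟨f, r, hf1, hf2⟩ := geometric_hahn_banach_closed_point hK hcl hnot
    set y := (InnerProductSpace.toDual ℝ E).symm f with hy
    have hfy : ∀ z, f z = ⟪y, z⟫ := fun z => by rw [hy, InnerProductSpace.toDual_symm_apply]
    have hyA : y ∈ A := ⟨r, fun x hx => by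
      rw [real_inner_comm, ← hfy]; exact (hf1 x hx).le⟩
    have hv0 : f v = 0 := by
      rw [hfy]
      exact (Submodule.mem_orthogonal _ _).1 hvm y (Submodule.subset_span hyA)
    rw [map_add, map_smul, hv0, smul_zero, add_zero] at hf2
    exact lt_asymm hf2 (hf1 x hx)

end P12

section P13
open Filter Topology

lemma cyl_frontier {E : Type*} [NormedAddCommGroup E] [InnerProductSpace ℝ E]
    {K : Set E} {u : E} (h : ∀ x ∈ K, ∀ t : ℝ, x + t • u ∈ K) (x : E) (t : ℝ) :
    x + t • u ∈ frontier K ↔ x ∈ frontier K := by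
  have h1 : (Homeomorph.addRight (t • u)) ⁻¹' K = K := by
    ext z
    show z + t • u ∈ K ↔ z ∈ K
    refine ⟨fun hz => ?_, fun hz => h z hz t⟩
    have := h _ hz (-t)
    have e : z + t • u + (-t) • u = z := by module
    rwa [e] at this
  have h2 := (Homeomorph.addRight (t • u)).preimage_frontier K
  rw [h1] at h2
  conv_rhs => rw [← h2]
  exact Iff.rfl

lemma cyl_case {n : ℕ} {K : Set (En n)} (hKne : K ≠ univ) {u : En n} (hu : ‖u‖ = 1)
    (h : ∀ x ∈ K, ∀ t : ℝ, x + t • u ∈ K) {s : ℝ}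
    (hsec : {x : En n | ⟪x, u⟫ = s} ⊆ K ∨
      IsConvexQuadricIn {x : En n | ⟪x, u⟫ = s} (frontier K ∩ {x : En n | ⟪x, u⟫ = s})) :
    IsConvexQuadric (frontier K) := by
  have huu : ⟪u, u⟫ = 1 := by rw [real_inner_self_eq_norm_sq, hu]; norm_num
  rcases hsec with hsub | hsec
  · exfalso
    apply hKne
    rw [eq_univ_iff_forall]
    intro x
    have hm : x + (s - ⟪x, u⟫) • u ∈ K := by
      apply hsub
      show ⟪x + (s - ⟪x, u⟫) • u, u⟫ = s
      rw [inner_add_left, inner_smul_left, huu, conj_trivial]; ring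
    have := h _ hm (-(s - ⟪x, u⟫))
    have e : x + (s - ⟪x, u⟫) • u + (-(s - ⟪x, u⟫)) • u = x := by module
    rwa [e] at this
  · obtain ⟨φ, L, e, q, U, h1, h2, h3, h4, hq, hU, hUc, hUn, hU0, hUf, hz, hfr⟩ := sec_data hu hsec
    have hLc : Continuous L := L.continuous_of_finiteDimensional
    have hψc : Continuous fun x => e + L x := continuous_const.add hLc
    have hLs : Function.Surjective L := fun y => by
      refine ⟨φ y - φ 0, ?_⟩
      have a := h1 y
      have b := h1 0
      rw [map_sub]
      have : e + L (φ y) - (e + L (φ 0)) = y - 0 := by rw [a, b]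
      rw [sub_zero, add_sub_add_left_eq_sub] at this
      exact this
    have hLo : IsOpenMap L := by
      have := (LinearMap.toContinuousLinearMap L).isOpenMap (by exact hLs)
      exact this
    have hψo : IsOpenMap fun x => e + L x := (Homeomorph.addLeft e).isOpenMap.comp hLo
    have hfU := hψo.preimage_frontier_eq_frontier_preimage hψc U
    have hfK : frontier K = frontier ((fun x => e + L x) ⁻¹' U) := by
      rw [← hfU]
      ext x
      show x ∈ frontier K ↔ e + L x ∈ frontier U
      rw [← hfr]
      obtain ⟨t, ht⟩ := h2 x
      conv_lhs => rw [ht]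
      exact cyl_frontier h _ t
    rw [hfK]
    refine convex_quadric_of (f := fun x => q (e + L x)) (hq.comp_aff L e) (hU.preimage hψc) ?_ ?_
      ?_ ?_ ?_
    · have hcv : Convex ℝ ((fun x => e + x) ⁻¹' U) := hUc.translate_preimage_right e
      exact hcv.linear_preimage L
    · obtain ⟨y, hy⟩ := hUn
      refine ⟨φ y, ?_⟩
      show e + L (φ y) ∈ U
      rwa [h1]
    · exact fun x hx => hU0 _ hx
    · intro x hx
      rw [← hfU] at hx
      exact hUf _ hx
    · obtain ⟨y, hy⟩ := hz
      exact ⟨φ y, by rw [h1]; exact hy⟩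

/-- A nonempty frontier of an open convex set which is convex contains a hyperplane. -/
lemma frontier_convex_line {F : Type*} [NormedAddCommGroup F] [InnerProductSpace ℝ F]
    [FiniteDimensional ℝ F]
    (hdim : 2 ≤ Module.finrank ℝ F) {U : Set F} (hU : IsOpen U) (hUc : Convex ℝ U)
    (hUn : U.Nonempty) (hUu : U ≠ univ) (hC : Convex ℝ (frontier U)) :
    ∃ p d : F, d ≠ 0 ∧ ∀ t : ℝ, p + t • d ∈ frontier U := by
  have hCn : (frontier U).Nonempty := nonempty_frontier_iff.2 ⟨hUn, hUu⟩
  have hdisj : Disjoint U (frontier U) := by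
    rw [hU.frontier_eq]; exact disjoint_sdiff_right
  obtain ⟨f, s, hf1, hf2⟩ := geometric_hahn_banach_open hUc hU hC hdisj
  have hcl : ∀ x ∈ closure U, f x ≤ s := by
    have : IsClosed {x | f x ≤ s} := isClosed_le f.continuous continuous_const
    exact fun x hx => closure_minimal (fun x hx => (hf1 x hx).le) this hx
  have hsub : {x | f x < s} ⊆ U := by
    obtain ⟨x0, hx0⟩ := hUn
    refine (convex_halfSpace_lt f.toLinearMap.isLinear s).isPreconnected.subset_of_closure_inter_subset
      hU ⟨x0, hf1 x0 hx0, hx0⟩ ?_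
    rintro x ⟨hx, hxs⟩
    by_contra hxU
    have : x ∈ frontier U := by rw [hU.frontier_eq]; exact ⟨hx, hxU⟩
    exact absurd (hf2 x this) (not_le.2 hxs)
  obtain ⟨p, hp⟩ := hCn
  obtain ⟨x0, hx0⟩ := hUn
  have hps : f p = s := le_antisymm (hcl p hp.1) (hf2 p hp)
  have hline : ∀ x, f x = s → x ∈ frontier U := by
    intro x hx
    rw [hU.frontier_eq]
    refine ⟨?_, fun h => absurd (hf1 x h) (by rw [hx]; exact lt_irrefl s)⟩
    have hc : Tendsto (fun t : ℝ => x + t • (x0 - p)) (𝓝[>] 0) (𝓝 x) := by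
      have : ContinuousAt (fun t : ℝ => x + t • (x0 - p)) 0 := by fun_prop
      have h2 := this.tendsto
      simp only [zero_smul, add_zero] at h2
      exact h2.mono_left nhdsWithin_le_nhds
    refine mem_closure_of_tendsto hc ?_
    filter_upwards [self_mem_nhdsWithin] with t ht
    apply hsub
    show f (x + t • (x0 - p)) < s
    rw [map_add, map_smul, map_sub, hx, hps, smul_eq_mul]
    have : f x0 < s := hf1 x0 hx0
    have ht' : (0:ℝ) < t := ht
    nlinarith
  have hker : LinearMap.ker f.toLinearMap ≠ ⊥ := by
    intro hb
    have h1 := LinearMap.finrank_range_add_finrank_ker f.toLinearMap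
    rw [hb, finrank_bot, add_zero] at h1
    have h2 := Submodule.finrank_le (LinearMap.range f.toLinearMap)
    rw [Module.finrank_self] at h2
    omega
  obtain ⟨d, hdm, hd⟩ := Submodule.exists_mem_ne_zero_of_ne_bot hker
  refine ⟨p, d, hd, fun t => hline _ ?_⟩
  have : f d = 0 := hdm
  rw [map_add, map_smul, this, smul_zero, add_zero, hps]

end P13

section P14
open Filter Topology

lemma no_line {E : Type*} [NormedAddCommGroup E] [InnerProductSpace ℝ E] {K : Set E} {y0 : E}
    (hy0 : y0 ∈ Om K) {p d : E} (hd : d ≠ 0) : ∃ t : ℝ, p + t • d ∉ K := by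
  rcases le_total 0 ⟪d, y0⟫ with h | h
  · obtain ⟨T, -, hT⟩ := Om_ray hy0 p hd h
    exact ⟨T, hT⟩
  · obtain ⟨T, -, hT⟩ := Om_ray hy0 p (neg_ne_zero.2 hd) (by rw [inner_neg_left]; linarith)
    exact ⟨-T, by rwa [neg_smul, ← smul_neg]⟩

lemma sec_lf {n : ℕ} (hn : 3 ≤ n) {K : Set (En n)} (hK : Convex ℝ K) (hcl : IsClosed K)
    {y0 : En n} (hy0 : y0 ∈ Om K) {u : En n} (hu : ‖u‖ = 1) {s : ℝ}
    (hsec : {x : En n | ⟪x, u⟫ = s} ⊆ K ∨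
      IsConvexQuadricIn {x : En n | ⟪x, u⟫ = s} (frontier K ∩ {x : En n | ⟪x, u⟫ = s})) :
    (∃ z ∈ interior K, ⟪z, u⟫ = s) ∧
    ∃ q : En n → ℝ, IsQuad q ∧ (∀ x ∈ frontier K, ⟪x, u⟫ = s → q x = 0) ∧
      ∀ x ∈ interior K, ⟪x, u⟫ = s → 0 < q x := by
  have huu : ⟪u, u⟫ = 1 := by rw [real_inner_self_eq_norm_sq, hu]; norm_num
  have hdim : 3 ≤ Module.finrank ℝ (En n) := by rw [finrank_euclideanSpace_fin]; exact hn
  obtain ⟨d0, hd0, hd0u, hd0y⟩ := exists_perp2 hdim u y0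
  rcases hsec with hsub | hsec
  · exfalso
    obtain ⟨t, ht⟩ := no_line hy0 (p := s • u) hd0
    apply ht
    apply hsub
    show ⟪s • u + t • d0, u⟫ = s
    rw [inner_add_left, inner_smul_left, inner_smul_left, huu, hd0u]; simp
  obtain ⟨φ, L, e, q, U, h1, h2, h3, h4, hq, hU, hUc, hUn, hU0, hUf, hz, hfr⟩ := sec_data hu hsec
  have hφ : ∀ y, φ y = φ.linearIsometry y + φ 0 := fun y => by
    have := φ.map_vadd 0 y
    simpa using this
  constructor
  · by_contra hno
    push Not at hno
    have hUu : U ≠ univ := by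
      rintro rfl
      obtain ⟨x, hx⟩ := hz
      exact hU0 x (mem_univ x) hx
    have hfU : frontier U = (φ : En (n-1) → En n) ⁻¹' K := by
      ext y
      rw [← hfr]
      show _ ↔ φ y ∈ K
      refine ⟨fun h => hcl.frontier_subset h, fun h => mem_frontier_of hcl h fun hi => ?_⟩
      exact hno _ hi (h3 y)
    have hC : Convex ℝ (frontier U) := by
      rw [hfU]
      exact hK.affine_preimage φ.toAffineMap
    have hd2 : 2 ≤ Module.finrank ℝ (En (n-1)) := by
      rw [finrank_euclideanSpace_fin]; omega
    obtain ⟨p, d, hd, hl⟩ := frontier_convex_line hd2 hU hUc hUn hUu hC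
    have hd' : φ.linearIsometry d ≠ 0 := by
      intro h0
      apply hd
      exact φ.linearIsometry.injective (by rw [h0, map_zero])
    obtain ⟨t, ht⟩ := no_line hy0 (p := φ p) hd'
    apply ht
    have := hl t
    rw [hfU] at this
    have h5 : φ (p + t • d) ∈ K := this
    rw [hφ, map_add, map_smul] at h5
    rw [hφ p]
    have e5 : φ.linearIsometry p + φ 0 + t • φ.linearIsometry d =
      φ.linearIsometry p + t • φ.linearIsometry d + φ 0 := by abel
    rw [e5]; exact h5
  · set g : En n → ℝ := fun x => q (e + L x) with hg
    have hgQ : IsQuad g := hq.comp_aff L e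
    have hgf : ∀ x ∈ frontier K, ⟪x, u⟫ = s → g x = 0 := by
      intro x hx hxs
      obtain ⟨y, rfl⟩ := h4 x hxs
      show q (e + L (φ y)) = 0
      rw [h1]
      exact hUf y ((hfr y).1 hx)
    have hgi : ∀ x ∈ interior K, ⟪x, u⟫ = s → g x ≠ 0 := by
      intro z hzi hzs hgz
      obtain ⟨y, hy⟩ := hUn
      have := lemma_UF hcl hy0 hzi hd0 hd0y (φ y - z) hgQ hgz (by
        intro a b hab _
        refine hgf _ hab ?_
        rw [inner_add_left, inner_add_left, inner_smul_left, inner_smul_left, inner_sub_left,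
          hd0u, h3, hzs]
        simp)
      rw [add_sub_cancel] at this
      have h6 : q (e + L (φ y)) = 0 := this
      rw [h1] at h6
      exact hU0 y hy h6
    set W := interior K ∩ {x : En n | ⟪x, u⟫ = s} with hW
    have hWc : Convex ℝ W := by
      refine hK.interior.inter ?_
      intro x hx y hy a b _ _ hab
      have hx' : ⟪x, u⟫ = s := hx
      have hy' : ⟪y, u⟫ = s := hy
      show ⟪a • x + b • y, u⟫ = s
      rw [inner_add_left, inner_smul_left, inner_smul_left, hx', hy', conj_trivial, conj_trivial,
        ← add_mul, hab, one_mul]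
    by_cases hpos : ∀ x ∈ W, 0 < g x
    · exact ⟨g, hgQ, hgf, fun x hx hxs => hpos x ⟨hx, hxs⟩⟩
    · push Not at hpos
      obtain ⟨w, hw, hw0⟩ := hpos
      refine ⟨fun x => -g x, hgQ.neg, fun x hx hxs => neg_eq_zero.2 (hgf x hx hxs), ?_⟩
      intro x hx hxs
      by_contra hc
      have hgx : 0 ≤ g x := by linarith
      obtain ⟨c, hcW, hc0⟩ := hWc.isPreconnected.intermediate_value hw ⟨hx, hxs⟩
        hgQ.continuous.continuousOn ⟨hw0, hgx⟩
      exact hgi c hcW.1 hcW.2 hc0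

lemma main_lf {n : ℕ} (hn : 3 ≤ n) {K : Set (En n)} (hK : Convex ℝ K) (hcl : IsClosed K)
    (hIn : (interior K).Nonempty) (hKne : K ≠ univ)
    (δ : sphere (0 : En n) 1 → ℝ) (hδ : Continuous δ)
    (hsec : ∀ u : sphere (0 : En n) 1,
      sphHyp δ u ⊆ K ∨ IsConvexQuadricIn (sphHyp δ u) (frontier K ∩ sphHyp δ u))
    {y0 : En n} (hy0 : y0 ∈ Om K) : IsConvexQuadric (frontier K) := by
  have hdim : 3 ≤ Module.finrank ℝ (En n) := by rw [finrank_euclideanSpace_fin]; exact hn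
  obtain ⟨g, hg⟩ := ContinuousMap.exists_restrict_eq (isClosed_sphere (x := (0 : En n)) (ε := 1))
    (⟨δ, hδ⟩ : C(sphere (0 : En n) 1, ℝ))
  have hgδ : ∀ u : sphere (0 : En n) 1, g (u : En n) = δ u := fun u =>
    congrArg (fun f : C(sphere (0 : En n) 1, ℝ) => f u) hg
  set D : En n → ℝ := fun y => ‖y‖ * g (‖y‖⁻¹ • y) with hD
  have hDc : ∀ y ≠ 0, ContinuousAt D y := by
    intro y hy
    have h1 : ContinuousAt (fun y : En n => ‖y‖⁻¹ • y) y :=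
      (continuous_norm.continuousAt.inv₀ (norm_ne_zero_iff.2 hy)).smul continuousAt_id
    exact continuous_norm.continuousAt.mul
      (ContinuousAt.comp (f := fun y : En n => ‖y‖⁻¹ • y) g.continuous.continuousAt h1)
  have hDh : ∀ y, ∀ t > (0:ℝ), D (t • y) = t * D y := by
    intro y t ht
    show ‖t • y‖ * g (‖t • y‖⁻¹ • t • y) = t * (‖y‖ * g (‖y‖⁻¹ • y))
    have e : ‖t • y‖⁻¹ • t • y = ‖y‖⁻¹ • y := by
      rw [norm_smul, Real.norm_of_nonneg ht.le, smul_smul, mul_inv, mul_right_comm,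
        inv_mul_cancel₀ ht.ne', one_mul]
    rw [e, norm_smul, Real.norm_of_nonneg ht.le, mul_assoc]
  have hall : ∀ y : En n, y ≠ 0 → ∃ u : En n, ∃ s, ‖u‖ = 1 ∧ (∀ x, ⟪x, y⟫ = D y ↔ ⟪x, u⟫ = s) ∧
      ({x : En n | ⟪x, u⟫ = s} ⊆ K ∨
      IsConvexQuadricIn {x : En n | ⟪x, u⟫ = s} (frontier K ∩ {x : En n | ⟪x, u⟫ = s})) := by
    intro y hy
    have hny : ‖y‖ ≠ 0 := norm_ne_zero_iff.2 hy
    have hu : ‖‖y‖⁻¹ • y‖ = 1 := by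
      rw [norm_smul, norm_inv, norm_norm, inv_mul_cancel₀ hny]
    have hm : ‖y‖⁻¹ • y ∈ sphere (0 : En n) 1 := by rw [mem_sphere_zero_iff_norm]; exact hu
    refine ⟨‖y‖⁻¹ • y, δ ⟨_, hm⟩, hu, fun x => ?_, hsec ⟨_, hm⟩⟩
    rw [← hgδ ⟨_, hm⟩, inner_smul_right]
    show ⟪x, y⟫ = ‖y‖ * g (‖y‖⁻¹ • y) ↔ ‖y‖⁻¹ * ⟪x, y⟫ = g (‖y‖⁻¹ • y)
    rw [inv_mul_eq_iff_eq_mul₀ hny]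
  obtain ⟨Q, hQ, hQf, hQi⟩ := global_Q hdim hK hcl hIn hDc hDh (fun y hy => by
      obtain ⟨u, s, hu, hus, hs⟩ := hall y hy
      obtain ⟨z, hz, hzs⟩ := (sec_lf hn hK hcl hy0 hu hs).1
      exact ⟨z, hz, (hus z).2 hzs⟩) (fun y hy => by
      obtain ⟨u, s, hu, hus, hs⟩ := hall y hy
      obtain ⟨q, hq, hq1, hq2⟩ := (sec_lf hn hK hcl hy0 hu hs).2
      exact ⟨q, hq, fun x hx h => hq1 x hx ((hus x).1 h), fun x hx h => hq2 x hx ((hus x).1 h)⟩) hy0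
  have hfr : frontier (interior K) = frontier K := by
    rw [isOpen_interior.frontier_eq, closure_int hK hcl hIn, hcl.frontier_eq]
  rw [← hfr]
  have hfn : (frontier K).Nonempty := nonempty_frontier_iff.2 ⟨hIn.mono interior_subset, hKne⟩
  obtain ⟨x0, hx0⟩ := hfn
  exact convex_quadric_of hQ isOpen_interior hK.interior hIn hQi (by rw [hfr]; exact hQf)
    ⟨x0, hQf x0 hx0⟩

end P14


/-- Theorem 2: if K ⊆ ℝⁿ (n ≥ 3) is a closed convex set with nonempty
interior, K ≠ ℝⁿ, and δ : S^{n−1} → ℝ is continuous such that every hyperplane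
H(u) = {x : ⟨x,u⟩ = δ(u)} either lies in K or meets the frontier of K along an
(n−1)-dimensional convex quadric, then the frontier of K is a convex quadric. -/
theorem frontier_is_convex_quadric_of_quadric_sections
    {n : ℕ} (hn : 3 ≤ n) (K : Set (En n)) (hKconv : Convex ℝ K) (hKcl : IsClosed K)
    (hKint : (interior K).Nonempty) (hKne : K ≠ Set.univ)
    (δ : sphere (0 : En n) 1 → ℝ) (hδ : Continuous δ)
    (hsec : ∀ u : sphere (0 : En n) 1,
      sphHyp δ u ⊆ K ∨ IsConvexQuadricIn (sphHyp δ u) (frontier K ∩ sphHyp δ u)) :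
    IsConvexQuadric (frontier K) := by
  have hne : K.Nonempty := hKint.mono interior_subset
  rcases dichotomy hKconv hKcl hne with ⟨y0, hy0⟩ | ⟨v, hv, hcyl⟩
  · exact main_lf hn hKconv hKcl hKint hKne δ hδ hsec hy0
  · have hu : ‖‖v‖⁻¹ • v‖ = 1 := by
      rw [norm_smul, norm_inv, norm_norm, inv_mul_cancel₀ (norm_ne_zero_iff.2 hv)]
    have hm : ‖v‖⁻¹ • v ∈ sphere (0 : En n) 1 := by rw [mem_sphere_zero_iff_norm]; exact hu
    refine cyl_case hKne hu (fun x hx t => ?_) (hsec ⟨_, hm⟩)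
    rw [smul_smul]
    exact hcyl x hx _
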